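/- arXiv:2411.03228 — 2 statements merged into one kernel-verified Lean document; each statement's English description precedes it below -/
import Mathlib

section
/- For binary images P and G on the same h×w grid and any real ε with 0 < ε < 1/4, if C is a regular connected component of FP, then F_ε(P) strongly deformation retracts onto F_ε(P) \ C. (This is the induction step in the proof that, under the zero-loss hypothesis, the inclusion TP ↪ F_ε(P) is a deformation retraction.) -/
open Set Metric

noncomputable section

/-- The plane modeled as `Fin 2 → ℝ` with the Pi (sup) norm. -/
abbrev Plane : Type := Fin 2 → ℝ

/-- The Euclidean plane (for Euclidean-norm disks and annuli). -/
abbrev EPlane : Type := EuclideanSpace ℝ (Fin 2)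

/-- The closed unit pixel `[i-1,i] × [j-1,j]` for a pixel index `(i,j)`. -/
def pixel (p : ℕ × ℕ) : Set Plane :=
  {x | x 0 ∈ Set.Icc ((p.1 : ℝ) - 1) (p.1 : ℝ) ∧ x 1 ∈ Set.Icc ((p.2 : ℝ) - 1) (p.2 : ℝ)}

/-- A binary image `S` lies on the `h × w` grid `{1,…,h} × {1,…,w}`. -/
def OnGrid (S : Set (ℕ × ℕ)) (h w : ℕ) : Prop :=
  S ⊆ Set.Icc 1 h ×ˢ Set.Icc 1 w

/-- The foreground `F(S)` of a binary image. -/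
def fg (S : Set (ℕ × ℕ)) : Set Plane := ⋃ p ∈ S, pixel p

/-- Closed `ε`-thickening `D_ε(X)` with respect to the sup norm. -/
def thick (ε : ℝ) (X : Set Plane) : Set Plane := {y | ∃ x ∈ X, ‖x - y‖ ≤ ε}

/-- `C` is a connected component of `A` (as a subset of the plane). -/
def IsCompOf (C A : Set Plane) : Prop := ∃ x ∈ A, C = connectedComponentIn A x

/-- Two subsets share a boundary edge if their closures intersect in an infinite set. -/
def SharesEdge (C D : Set Plane) : Prop := (closure C ∩ closure D).Infinite

/-- `X` strongly deformation retracts onto `A`. -/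
def SDR (X A : Set Plane) : Prop :=
  ∃ H : C(↥X × unitInterval, ↥X),
    (∀ x, H (x, 0) = x) ∧ (∀ x, ((H (x, 1) : Plane)) ∈ A) ∧
    (∀ a : ↥X, (a : Plane) ∈ A → ∀ t, H (a, t) = a)

def TPset (P G : Set (ℕ × ℕ)) (ε : ℝ) : Set Plane := thick ε (fg P) ∩ thick (2 * ε) (fg G)
def TNset (P G : Set (ℕ × ℕ)) (ε : ℝ) : Set Plane := (thick ε (fg P))ᶜ ∩ (thick (2 * ε) (fg G))ᶜ
def FPset (P G : Set (ℕ × ℕ)) (ε : ℝ) : Set Plane := thick ε (fg P) ∩ (thick (2 * ε) (fg G))ᶜ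
def FNset (P G : Set (ℕ × ℕ)) (ε : ℝ) : Set Plane := (thick ε (fg P))ᶜ ∩ thick (2 * ε) (fg G)

/-- A component `C` (of `FP` or `FN`) is regular: exactly one component of `TP` and exactly
one component of `TN` share a boundary edge with it. -/
def RegularComp (P G : Set (ℕ × ℕ)) (ε : ℝ) (C : Set Plane) : Prop :=
  (∃! T : Set Plane, IsCompOf T (TPset P G ε) ∧ SharesEdge T C) ∧
  (∃! T : Set Plane, IsCompOf T (TNset P G ε) ∧ SharesEdge T C)

/-- The zero-loss hypothesis: every component of `FP` and every component of `FN` is regular. -/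
def ZeroLoss (P G : Set (ℕ × ℕ)) (ε : ℝ) : Prop :=
  (∀ C : Set Plane, IsCompOf C (FPset P G ε) → RegularComp P G ε C) ∧
  (∀ C : Set Plane, IsCompOf C (FNset P G ε) → RegularComp P G ε C)

/-! ### Part 1: strong deformation retracts -/

lemma SDR_refl (X : Set Plane) : SDR X X :=
  ⟨⟨fun q => q.1, continuous_fst⟩, fun _ => rfl, fun x => x.2, fun _ _ _ => rfl⟩

lemma SDR_trans {X Y Z : Set Plane} (hZY : Z ⊆ Y) (hYX : Y ⊆ X) (h1 : SDR X Y) (h2 : SDR Y Z) :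
    SDR X Z := by
  obtain ⟨H1, h10, h11, h1a⟩ := h1
  obtain ⟨H2, h20, h21, h2a⟩ := h2
  let pr : ℝ → unitInterval := Set.projIcc 0 1 zero_le_one
  have hpr : Continuous pr := continuous_projIcc
  let r : X → Y := fun x => ⟨H1 (x, 1), h11 x⟩
  have hr : Continuous r := by
    apply Continuous.subtype_mk
    fun_prop
  let inc : Y → X := Set.inclusion hYX
  have hinc : Continuous inc := continuous_inclusion hYX
  let F : X × unitInterval → X := fun q =>
    if (q.2 : ℝ) ≤ 1 / 2 then H1 (q.1, pr (2 * (q.2 : ℝ))) else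
      inc (H2 (r q.1, pr (2 * (q.2 : ℝ) - 1)))
  have hF : Continuous F := by
    apply Continuous.if_le
    · fun_prop
    · fun_prop
    · fun_prop
    · fun_prop
    · intro q hq
      have e1 : pr (2 * (q.2 : ℝ)) = 1 := by
        rw [hq]; apply Subtype.ext; simp [pr, Set.projIcc]
      have e2 : pr (2 * (q.2 : ℝ) - 1) = 0 := by
        rw [hq]; apply Subtype.ext; simp [pr, Set.projIcc]
      rw [e1, e2, h20]
  refine ⟨⟨F, hF⟩, ?_, ?_, ?_⟩
  · intro x
    have : pr (2 * ((0 : unitInterval) : ℝ)) = 0 := by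
      apply Subtype.ext; simp [pr, Set.projIcc]
    change (if (((0 : unitInterval)) : ℝ) ≤ 1 / 2 then H1 (x, pr (2 * ((0 : unitInterval) : ℝ)))
      else _) = x
    rw [if_pos (by norm_num), this, h10]
  · intro x
    have : pr (2 * ((1 : unitInterval) : ℝ) - 1) = 1 := by
      apply Subtype.ext; simp [pr, Set.projIcc]; norm_num
    change ((if (((1 : unitInterval)) : ℝ) ≤ 1 / 2 then _
      else inc (H2 (r x, pr (2 * ((1 : unitInterval) : ℝ) - 1))) : X) : Plane) ∈ Z
    rw [if_neg (by norm_num), this]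
    exact h21 _
  · intro a ha t
    change (if ((t : ℝ)) ≤ 1 / 2 then H1 (a, pr (2 * (t : ℝ)))
      else inc (H2 (r a, pr (2 * (t : ℝ) - 1)))) = a
    have e : r a = ⟨a, hZY ha⟩ := by
      apply Subtype.ext
      change ((H1 (a, 1) : X) : Plane) = a
      rw [h1a a (hZY ha)]
    split_ifs
    · exact h1a a (hZY ha) _
    · rw [e, h2a ⟨a, hZY ha⟩ ha]

lemma SDR_cover {X Y Q : Set Plane} (hX : X = Y ∪ Q) (hY : IsClosed Y) (hQ : IsClosed Q)
    (hQc : Convex ℝ Q) (r : Plane → Plane) (hr : ContinuousOn r Q)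
    (hrY : ∀ p ∈ Q, r p ∈ Y) (hrQ : ∀ p ∈ Q, r p ∈ Q) (hid : ∀ p ∈ Q, p ∈ Y → r p = p) :
    SDR X Y := by
  classical
  subst hX
  let F : Plane × ℝ → Plane := fun q => if q.1 ∈ Y then q.1 else q.1 + q.2 • (r q.1 - q.1)
  have hFQ : ∀ p ∈ Q, ∀ t : ℝ, F (p, t) = p + t • (r p - p) := by
    intro p hp t
    simp only [F]
    split_ifs with h
    · rw [hid p hp h]; simp
    · rfl
  have c1 : ContinuousOn F (Y ×ˢ univ) := by
    apply ContinuousOn.congr (f := fun q => q.1) continuous_fst.continuousOn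
    rintro ⟨p, t⟩ ⟨hp, -⟩
    exact if_pos hp
  have c2 : ContinuousOn F (Q ×ˢ univ) := by
    have : ContinuousOn (fun q : Plane × ℝ => q.1 + q.2 • (r q.1 - q.1)) (Q ×ˢ univ) := by
      have : ContinuousOn (fun q : Plane × ℝ => r q.1) (Q ×ˢ univ) :=
        hr.comp continuousOn_fst (fun q hq => hq.1)
      exact continuousOn_fst.add (continuousOn_snd.smul (this.sub continuousOn_fst))
    apply this.congr
    rintro ⟨p, t⟩ ⟨hp, -⟩
    exact hFQ p hp t
  have c3 : ContinuousOn F ((Y ×ˢ univ) ∪ (Q ×ˢ univ)) :=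
    c1.union_of_isClosed c2 (hY.prod isClosed_univ) (hQ.prod isClosed_univ)
  have hmem : ∀ (x : ↥(Y ∪ Q)) (t : unitInterval), F ((x : Plane), (t : ℝ)) ∈ Y ∪ Q := by
    rintro ⟨x, hx⟩ t
    by_cases hxY : x ∈ Y
    · simp only [F, hxY, if_true]; exact Or.inl hxY
    · have hxQ : x ∈ Q := hx.resolve_left hxY
      rw [hFQ x hxQ]
      right
      have := hQc hxQ (hrQ x hxQ) (a := 1 - (t : ℝ)) (b := t) (by linarith [t.2.2]) t.2.1 (by ring)
      convert this using 1
      ext l; simp; ring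
  refine ⟨⟨fun q => ⟨F ((q.1 : Plane), (q.2 : ℝ)), hmem q.1 q.2⟩, ?_⟩, ?_, ?_, ?_⟩
  · apply Continuous.subtype_mk
    apply c3.comp_continuous (by fun_prop)
    rintro ⟨⟨x, hx⟩, t⟩
    rcases hx with h | h
    · exact Or.inl ⟨h, trivial⟩
    · exact Or.inr ⟨h, trivial⟩
  · rintro ⟨x, hx⟩
    apply Subtype.ext
    simp [F]
  · rintro ⟨x, hx⟩
    by_cases hxY : x ∈ Y
    · simpa [F, hxY] using hxY
    · have hxQ : x ∈ Q := hx.resolve_left hxY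
      change F (x, ((1 : unitInterval) : ℝ)) ∈ Y
      rw [hFQ x hxQ]
      simpa using hrY x hxQ
  · rintro ⟨x, hx⟩ hxY t
    apply Subtype.ext
    change x ∈ Y at hxY
    simp [F, hxY]

/-- Collapsing a square through a free edge. -/
lemma SDR_square {X Y : Set Plane} (i j : Fin 2) (hij : i ≠ j) (ci cj a b : ℝ) (ha : a ≠ 0)
    (hb : 0 < b) (hY : IsClosed Y)
    (hX : X = Y ∪ {p | |(p i - ci) / a| ≤ 1 ∧ |(p j - cj) / b| ≤ 1})
    (hQY : ∀ p : Plane, |(p i - ci) / a| ≤ 1 → |(p j - cj) / b| ≤ 1 →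
      (p ∈ Y ↔ ((p i - ci) / a = -1 ∨ |(p j - cj) / b| = 1))) : SDR X Y := by
  have hcov : ∀ l : Fin 2, l = i ∨ l = j := by omega
  let Q : Set Plane := {p | |(p i - ci) / a| ≤ 1 ∧ |(p j - cj) / b| ≤ 1}
  let u : Plane → ℝ := fun p => (p i - ci) / a
  let v : Plane → ℝ := fun p => (p j - cj) / b
  let M : Plane → ℝ := fun p => max |v p| ((2 - u p) / 3)
  let r : Plane → Plane := fun p l =>
    if l = i then ci + a * (2 + (u p - 2) / M p) else cj + b * (v p / M p)
  have hu : Continuous u := by fun_prop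
  have hv : Continuous v := by fun_prop
  have hM : Continuous M := by fun_prop
  have hMpos : ∀ p ∈ Q, 0 < M p := by
    intro p hp
    have : u p ≤ 1 := (abs_le.1 hp.1).2
    apply lt_max_of_lt_right
    linarith
  have hM1 : ∀ p ∈ Q, M p ≤ 1 := by
    intro p hp
    have : -1 ≤ u p := (abs_le.1 hp.1).1
    apply max_le hp.2
    linarith
  have ri : ∀ p, (r p i - ci) / a = 2 + (u p - 2) / M p := by
    intro p; simp only [r, if_true]; field_simp; ring
  have rj : ∀ p, (r p j - cj) / b = v p / M p := by
    intro p; simp only [r, if_neg hij.symm]; field_simp; ring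
  have hcl : IsClosed Q := by
    apply IsClosed.inter
    · exact isClosed_le (f := fun p : Plane => |(p i - ci) / a|) (by fun_prop) continuous_const
    · exact isClosed_le (f := fun p : Plane => |(p j - cj) / b|) (by fun_prop) continuous_const
  have hrQ : ∀ p ∈ Q, r p ∈ Q := by
    intro p hp
    have h0 := hMpos p hp
    have h1 := hM1 p hp
    have h2 : |v p| ≤ M p := le_max_left _ _
    have h3 : (2 - u p) / 3 ≤ M p := le_max_right _ _
    have h4 : u p ≤ 1 := (abs_le.1 hp.1).2
    refine ⟨?_, ?_⟩
    · change |(r p i - ci) / a| ≤ 1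
      rw [ri, abs_le]
      constructor
      · have : -3 ≤ (u p - 2) / M p := by rw [le_div_iff₀ h0]; linarith
        linarith
      · have : (u p - 2) / M p ≤ -1 := by rw [div_le_iff₀ h0]; linarith
        linarith
    · change |(r p j - cj) / b| ≤ 1
      rw [rj, abs_div, abs_of_pos h0, div_le_one h0]
      exact h2
  refine SDR_cover (Q := Q) hX hY hcl ?_ r ?_ ?_ hrQ ?_
  · have : Q = (fun p : Plane => p i) ⁻¹' {x | |(x - ci) / a| ≤ 1} ∩
        (fun p : Plane => p j) ⁻¹' {x | |(x - cj) / b| ≤ 1} := rfl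
    have key : ∀ c d : ℝ, d ≠ 0 → Convex ℝ {x : ℝ | |(x - c) / d| ≤ 1} := by
      intro c d hd
      have : {x : ℝ | |(x - c) / d| ≤ 1} = Set.Icc (c - |d|) (c + |d|) := by
        ext x
        simp only [mem_ofPred_eq, abs_div, mem_Icc]
        rw [div_le_one (abs_pos.2 hd), abs_le]
        constructor <;> rintro ⟨h1, h2⟩ <;> constructor <;> linarith
      rw [this]; exact convex_Icc _ _
    rw [this]
    exact ((key ci a ha).linear_preimage (LinearMap.proj (R := ℝ) (φ := fun _ : Fin 2 => ℝ) i)).inter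
      ((key cj b hb.ne').linear_preimage (LinearMap.proj (R := ℝ) (φ := fun _ : Fin 2 => ℝ) j))
  · rw [continuousOn_pi]
    intro l
    have hne : ∀ p ∈ Q, M p ≠ 0 := fun p hp => (hMpos p hp).ne'
    by_cases hl : l = i
    · simp only [r, hl, if_true]
      fun_prop (disch := assumption)
    · simp only [r, hl, if_false]
      fun_prop (disch := assumption)
  · intro p hp
    have h0 := hMpos p hp
    have hq := hrQ p hp
    rw [hQY _ hq.1 hq.2, ri, rj]
    rcases max_choice |v p| ((2 - u p) / 3) with h | h
    · right
      change M p = _ at h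
      rw [abs_div, abs_of_pos h0, ← h, div_self h0.ne']
    · left
      change M p = _ at h
      have : u p - 2 = - 3 * M p := by rw [h]; ring
      rw [this]; field_simp; norm_num
  · intro p hp hpY
    rw [hQY _ hp.1 hp.2] at hpY
    have h1 := hM1 p hp
    have h2 : M p = 1 := by
      apply le_antisymm h1
      rcases hpY with h | h
      · change u p = -1 at h
        apply le_max_of_le_right
        rw [h]; norm_num
      · exact le_max_of_le_left h.ge
    ext l
    rcases hcov l with rfl | rfl
    · simp only [r, if_true, h2, u]; field_simp; ring
    · simp only [r, if_neg hij.symm, h2, v]; field_simp; ring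

/-- Collapsing a segment through a free endpoint. -/
lemma SDR_segment {X Y : Set Plane} (i j : Fin 2) (hij : i ≠ j) (ci cj a : ℝ) (ha : a ≠ 0)
    (hY : IsClosed Y)
    (hX : X = Y ∪ {p | |(p i - ci) / a| ≤ 1 ∧ p j = cj})
    (hQY : ∀ p : Plane, |(p i - ci) / a| ≤ 1 → p j = cj →
      (p ∈ Y ↔ (p i - ci) / a = -1)) : SDR X Y := by
  have hcov : ∀ l : Fin 2, l = i ∨ l = j := by omega
  let Q : Set Plane := {p | |(p i - ci) / a| ≤ 1 ∧ p j = cj}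
  let r : Plane → Plane := fun p l => if l = i then ci - a else cj
  have ri : ∀ p, (r p i - ci) / a = -1 := by
    intro p; simp only [r, if_true]; field_simp; ring
  have rj : ∀ p, r p j = cj := by
    intro p; simp only [r, if_neg hij.symm]
  have hcl : IsClosed Q := by
    apply IsClosed.inter
    · exact isClosed_le (f := fun p : Plane => |(p i - ci) / a|) (by fun_prop) continuous_const
    · exact isClosed_eq (f := fun p : Plane => p j) (by fun_prop) continuous_const
  have hrQ : ∀ p ∈ Q, r p ∈ Q := by
    intro p hp
    refine ⟨?_, rj p⟩
    change |(r p i - ci) / a| ≤ 1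
    rw [ri p]; norm_num
  refine SDR_cover (Q := Q) hX hY hcl ?_ r ?_ ?_ hrQ ?_
  · have : Q = (fun p : Plane => p i) ⁻¹' {x | |(x - ci) / a| ≤ 1} ∩
        (fun p : Plane => p j) ⁻¹' {cj} := rfl
    have key : ∀ c d : ℝ, d ≠ 0 → Convex ℝ {x : ℝ | |(x - c) / d| ≤ 1} := by
      intro c d hd
      have : {x : ℝ | |(x - c) / d| ≤ 1} = Set.Icc (c - |d|) (c + |d|) := by
        ext x
        simp only [mem_ofPred_eq, abs_div, mem_Icc]
        rw [div_le_one (abs_pos.2 hd), abs_le]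
        constructor <;> rintro ⟨h1, h2⟩ <;> constructor <;> linarith
      rw [this]; exact convex_Icc _ _
    rw [this]
    exact ((key ci a ha).linear_preimage (LinearMap.proj (R := ℝ) (φ := fun _ : Fin 2 => ℝ) i)).inter
      ((convex_singleton cj).linear_preimage (LinearMap.proj (R := ℝ) (φ := fun _ : Fin 2 => ℝ) j))
  · exact continuousOn_const
  · intro p hp
    have hq := hrQ p hp
    rw [hQY _ hq.1 hq.2, ri p]
  · intro p hp hpY
    rw [hQY _ hp.1 hp.2] at hpY
    ext l
    rcases hcov l with rfl | rfl
    · simp only [r, if_true]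
      field_simp at hpY
      linarith
    · simp only [r, if_neg hij.symm, hp.2]


/-! ### Part 2: grids and cells -/

/-- A strictly increasing family of grid lines, with the cell index function: `ix x = 2 k` on the
line `g k`, and `ix x = 2 k + 1` strictly between `g k` and `g (k + 1)`. -/
structure Grid where
  g : ℤ → ℝ
  ix : ℝ → ℤ
  mono : StrictMono g
  le_ix : ∀ k x, 2 * k ≤ ix x ↔ g k ≤ x
  ix_le : ∀ k x, ix x ≤ 2 * k ↔ x ≤ g k

/-- `m` is a face of `m'` in dimension one. -/
def cstar1 (m m' : ℤ) : Prop := m' = m ∨ (m % 2 = 0 ∧ (m' = m + 1 ∨ m' = m - 1))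

/-- `a` is a face of `b`. -/
def cstar (a b : ℤ × ℤ) : Prop := cstar1 a.1 b.1 ∧ cstar1 a.2 b.2

/-- closed under taking faces -/
def DC (S : Set (ℤ × ℤ)) : Prop := ∀ a b, cstar a b → b ∈ S → a ∈ S

/-- locally closed -/
def LC (S : Set (ℤ × ℤ)) : Prop := ∀ a b c, cstar a b → cstar b c → a ∈ S → c ∈ S → b ∈ S

/-- `f` is invariant under adjacency inside `S` -/
def Inv4 (S : Set (ℤ × ℤ)) (f : ℤ × ℤ → Prop) : Prop := ∀ m n, (m, n) ∈ S →
  ((m + 1, n) ∈ S → (f (m, n) ↔ f (m + 1, n))) ∧ ((m, n + 1) ∈ S → (f (m, n) ↔ f (m, n + 1)))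

/-- elementary collapse -/
def Step (S S' : Set (ℤ × ℤ)) : Prop := DC S ∧ DC S' ∧ ∃ a b : ℤ × ℤ, S' = S \ {b, a} ∧ b ∈ S ∧
  ((b.1 % 2 = 1 ∧ a.2 = b.2 ∧ (a.1 = b.1 + 1 ∨ a.1 = b.1 - 1)) ∨
   (b.2 % 2 = 1 ∧ a.1 = b.1 ∧ (a.2 = b.2 + 1 ∨ a.2 = b.2 - 1)))

namespace Grid

variable (Γ : Grid)

/-- the index of the cell containing a point -/
def idx (p : Plane) : ℤ × ℤ := (Γ.ix (p 0), Γ.ix (p 1))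

/-- the union of the cells with index in `S` -/
def cell (S : Set (ℤ × ℤ)) : Set Plane := {p | Γ.idx p ∈ S}

lemma mem_cell (S : Set (ℤ × ℤ)) (p : Plane) : p ∈ Γ.cell S ↔ Γ.idx p ∈ S := Iff.rfl

lemma ix_even (k : ℤ) (x : ℝ) : Γ.ix x = 2 * k ↔ x = Γ.g k := by
  constructor
  · intro h
    exact le_antisymm ((Γ.ix_le k x).1 h.le) ((Γ.le_ix k x).1 h.ge)
  · intro h
    exact le_antisymm ((Γ.ix_le k x).2 h.le) ((Γ.le_ix k x).2 h.ge)

lemma ix_odd (k : ℤ) (x : ℝ) : Γ.ix x = 2 * k + 1 ↔ Γ.g k < x ∧ x < Γ.g (k + 1) := by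
  have h1 := Γ.ix_le k x
  have h2 := Γ.le_ix (k + 1) x
  rw [← not_le, ← not_le, ← h1, ← h2]
  omega

lemma near1 (x : ℝ) : ∀ᶠ y in nhds x, cstar1 (Γ.ix x) (Γ.ix y) := by
  rcases Int.even_or_odd' (Γ.ix x) with ⟨k, hk | hk⟩
  · have hx := (Γ.ix_even k x).1 hk
    have h1 : Γ.g (k - 1) < x := by rw [hx]; exact Γ.mono (by omega)
    have h2 : x < Γ.g (k + 1) := by rw [hx]; exact Γ.mono (by omega)
    filter_upwards [Ioo_mem_nhds h1 h2] with y hy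
    have h3 := (Γ.ix_le (k - 1) y).not.2 (not_le.2 hy.1)
    have h4 := (Γ.le_ix (k + 1) y).not.2 (not_le.2 hy.2)
    unfold cstar1
    omega
  · have hx := (Γ.ix_odd k x).1 hk
    filter_upwards [Ioo_mem_nhds hx.1 hx.2] with y hy
    have := (Γ.ix_odd k y).2 hy
    unfold cstar1
    omega

lemma near (p : Plane) : ∀ᶠ q in nhds p, cstar (Γ.idx p) (Γ.idx q) := by
  have h0 := (continuous_apply (0 : Fin 2)).continuousAt.eventually (Γ.near1 (p 0))
  have h1 := (continuous_apply (1 : Fin 2)).continuousAt.eventually (Γ.near1 (p 1))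
  filter_upwards [h0, h1] with q a b
  exact ⟨a, b⟩

lemma isClosed_cell {S : Set (ℤ × ℤ)} (hS : DC S) : IsClosed (Γ.cell S) := by
  rw [← isOpen_compl_iff, isOpen_iff_mem_nhds]
  intro p hp
  filter_upwards [Γ.near p] with q hq
  exact fun h => hp (hS _ _ hq h)

lemma ix_surj (m : ℤ) : ∃ x, Γ.ix x = m := by
  rcases Int.even_or_odd' m with ⟨k, hk | hk⟩
  · exact ⟨Γ.g k, by rw [hk, ix_even]⟩
  · refine ⟨(Γ.g k + Γ.g (k + 1)) / 2, ?_⟩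
    have : Γ.g k < Γ.g (k + 1) := Γ.mono (by omega)
    rw [hk, ix_odd]
    constructor <;> linarith

lemma idx_surj (a : ℤ × ℤ) : ∃ p, Γ.idx p = a := by
  obtain ⟨x, hx⟩ := Γ.ix_surj a.1
  obtain ⟨y, hy⟩ := Γ.ix_surj a.2
  exact ⟨![x, y], by simp [idx, hx, hy]⟩

lemma box (k : ℤ) (s : ℝ) (hs : s = 1 ∨ s = -1) (x : ℝ) :
    |(x - (Γ.g k + Γ.g (k + 1)) / 2) / (s * ((Γ.g (k + 1) - Γ.g k) / 2))| ≤ 1 ↔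
      (2 * k ≤ Γ.ix x ∧ Γ.ix x ≤ 2 * k + 2) := by
  have h1 := Γ.le_ix k x
  have h2 := Γ.ix_le (k + 1) x
  have h3 : Γ.g k < Γ.g (k + 1) := Γ.mono (by omega)
  rw [show 2 * k + 2 = 2 * (k + 1) by ring, h1, h2, abs_div, abs_mul]
  have hs' : |s| = 1 := by rcases hs with rfl | rfl <;> simp
  rw [hs', one_mul, abs_of_pos (by linarith : 0 < (Γ.g (k + 1) - Γ.g k) / 2),
    div_le_one (by linarith), abs_le]
  constructor <;> rintro ⟨a, b⟩ <;> constructor <;> linarith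

lemma box_end (k : ℤ) (s : ℝ) (hs : s = 1 ∨ s = -1) (x : ℝ) :
    (x - (Γ.g k + Γ.g (k + 1)) / 2) / (s * ((Γ.g (k + 1) - Γ.g k) / 2)) = -1 ↔
      (Γ.ix x = if s = 1 then 2 * k else 2 * k + 2) := by
  have h1 := Γ.ix_even k x
  have h2 := Γ.ix_even (k + 1) x
  have h3 : Γ.g k < Γ.g (k + 1) := Γ.mono (by omega)
  have h4 : (Γ.g (k + 1) - Γ.g k) / 2 ≠ 0 := by linarith
  rcases hs with rfl | rfl
  · rw [if_pos rfl, h1, one_mul, div_eq_iff h4]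
    constructor <;> intro h <;> linarith
  · rw [if_neg (by norm_num), show 2 * k + 2 = 2 * (k + 1) by ring, h2,
      div_eq_iff (by intro h; apply h4; linarith)]
    constructor <;> intro h <;> linarith

lemma box_ends (k : ℤ) (x : ℝ) :
    |(x - (Γ.g k + Γ.g (k + 1)) / 2) / ((Γ.g (k + 1) - Γ.g k) / 2)| = 1 ↔
      (Γ.ix x = 2 * k ∨ Γ.ix x = 2 * k + 2) := by
  have h1 := Γ.ix_even k x
  have h2 := Γ.ix_even (k + 1) x
  have h3 : Γ.g k < Γ.g (k + 1) := Γ.mono (by omega)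
  have h4 : (Γ.g (k + 1) - Γ.g k) / 2 ≠ 0 := by linarith
  rw [h1, show 2 * k + 2 = 2 * (k + 1) by ring, h2, abs_eq (by norm_num), div_eq_iff h4,
    div_eq_iff h4]
  constructor
  · rintro (h | h)
    · right; linarith
    · left; linarith
  · rintro (h | h)
    · right; linarith
    · left; linarith

/-- cells with the coordinates in a given order -/
def cellij (i j : Fin 2) (S : Set (ℤ × ℤ)) : Set Plane := {p | (Γ.ix (p i), Γ.ix (p j)) ∈ S}

lemma SDR_collapse (i j : Fin 2) (hij : i ≠ j) (S : Set (ℤ × ℤ)) (m n e : ℤ) (hm : m % 2 = 1)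
    (he : e = m + 1 ∨ e = m - 1) (hS : DC S)
    (hcl : IsClosed (Γ.cellij i j (S \ {(m, n), (e, n)}))) (hmS : (m, n) ∈ S) :
    SDR (Γ.cellij i j S) (Γ.cellij i j (S \ {(m, n), (e, n)})) := by
  obtain ⟨k, rfl⟩ : ∃ k, m = 2 * k + 1 := ⟨m / 2, by omega⟩
  obtain ⟨s, hs, hse⟩ : ∃ s : ℝ, (s = 1 ∨ s = -1) ∧
      e = 2 * (2 * k + 1) - (if s = 1 then 2 * k else 2 * k + 2) := by
    rcases he with rfl | rfl
    · exact ⟨1, Or.inl rfl, by rw [if_pos rfl]; ring⟩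
    · exact ⟨-1, Or.inr rfl, by rw [if_neg (by norm_num)]; ring⟩
  have h3 : Γ.g k < Γ.g (k + 1) := Γ.mono (by omega)
  have ha : s * ((Γ.g (k + 1) - Γ.g k) / 2) ≠ 0 := by
    apply mul_ne_zero
    · rcases hs with rfl | rfl <;> norm_num
    · linarith
  have hface : ∀ p : Plane, (2 * k ≤ Γ.ix (p i) ∧ Γ.ix (p i) ≤ 2 * k + 2) →
      cstar1 (Γ.ix (p j)) n → (Γ.ix (p i), Γ.ix (p j)) ∈ S := by
    intro p hp hp'
    refine hS _ _ ⟨?_, hp'⟩ hmS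
    simp only [cstar1]
    omega
  rcases Int.even_or_odd' n with ⟨l, hl | hl⟩
  · apply SDR_segment i j hij ((Γ.g k + Γ.g (k + 1)) / 2) (Γ.g l)
      (s * ((Γ.g (k + 1) - Γ.g k) / 2)) ha hcl
    · ext p
      have b1 := Γ.box k s hs (p i)
      have b2 := Γ.ix_even l (p j)
      simp only [cellij, mem_ofPred_eq, mem_union, mem_sdiff, mem_insert_iff, mem_singleton_iff,
        Prod.mk.injEq]
      rw [b1, ← b2]
      constructor
      · intro h
        by_cases hh : Γ.ix (p i) = 2 * k + 1 ∧ Γ.ix (p j) = n ∨ Γ.ix (p i) = e ∧ Γ.ix (p j) = n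
        · right; omega
        · exact Or.inl ⟨h, hh⟩
      · rintro (h | h)
        · exact h.1
        · apply hface p h.1
          simp only [cstar1]; omega
    · intro p h1 h2
      rw [Γ.box k s hs] at h1
      rw [← Γ.ix_even] at h2
      rw [Γ.box_end k s hs]
      have := hface p h1 (by simp only [cstar1]; omega)
      simp only [cellij, mem_ofPred_eq, mem_sdiff, mem_insert_iff, mem_singleton_iff,
        Prod.mk.injEq, this, true_and]
      generalize hw : (if s = 1 then 2 * k else 2 * k + 2) = w at *
      omega
  · have h4 : Γ.g l < Γ.g (l + 1) := Γ.mono (by omega)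
    apply SDR_square i j hij ((Γ.g k + Γ.g (k + 1)) / 2) ((Γ.g l + Γ.g (l + 1)) / 2)
      (s * ((Γ.g (k + 1) - Γ.g k) / 2)) ((Γ.g (l + 1) - Γ.g l) / 2) ha (by linarith) hcl
    · ext p
      have b1 := Γ.box k s hs (p i)
      have b2 := Γ.box l 1 (Or.inl rfl) (p j)
      rw [one_mul] at b2
      simp only [cellij, mem_ofPred_eq, mem_union, mem_sdiff, mem_insert_iff, mem_singleton_iff,
        Prod.mk.injEq]
      rw [b1, b2]
      constructor
      · intro h
        by_cases hh : Γ.ix (p i) = 2 * k + 1 ∧ Γ.ix (p j) = n ∨ Γ.ix (p i) = e ∧ Γ.ix (p j) = n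
        · right; omega
        · exact Or.inl ⟨h, hh⟩
      · rintro (h | h)
        · exact h.1
        · apply hface p h.1
          simp only [cstar1]; omega
    · intro p h1 h2
      rw [Γ.box k s hs] at h1
      have b2 := Γ.box l 1 (Or.inl rfl) (p j)
      rw [one_mul] at b2
      rw [b2] at h2
      rw [Γ.box_end k s hs, Γ.box_ends]
      have := hface p h1 (by simp only [cstar1]; omega)
      simp only [cellij, mem_ofPred_eq, mem_sdiff, mem_insert_iff, mem_singleton_iff,
        Prod.mk.injEq, this, true_and]
      generalize hw : (if s = 1 then 2 * k else 2 * k + 2) = w at *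
      have hw' : w = 2 * k ∨ w = 2 * k + 2 := by split_ifs at hw <;> omega
      omega

lemma SDR_step {S S' : Set (ℤ × ℤ)} (h : Step S S') : SDR (Γ.cell S) (Γ.cell S') := by
  obtain ⟨h1, h2, ⟨a1, a2⟩, ⟨b1, b2⟩, rfl, hb, h | h⟩ := h
  · obtain ⟨hodd, rfl, h⟩ := h
    exact Γ.SDR_collapse 0 1 (by decide) S b1 _ a1 hodd h h1 (Γ.isClosed_cell h2) hb
  · obtain ⟨hodd, rfl, h⟩ := h
    have e1 : Γ.cell S = Γ.cellij 1 0 (Prod.swap ⁻¹' S) := rfl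
    have e2 : Γ.cell (S \ {(a1, b2), (a1, a2)}) =
        Γ.cellij 1 0 ((Prod.swap ⁻¹' S) \ {(b2, a1), (a2, a1)}) := by
      ext p
      simp only [cell, cellij, idx, mem_ofPred_eq, mem_sdiff, mem_insert_iff, mem_singleton_iff,
        Prod.mk.injEq, mem_preimage, Prod.swap_prod_mk]
      tauto
    have hcl := Γ.isClosed_cell h2
    simp only at hcl ⊢
    rw [e2] at hcl ⊢
    rw [e1]
    refine Γ.SDR_collapse 1 0 (by decide) (Prod.swap ⁻¹' S) b2 a1 a2 hodd h ?_ hcl hb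
    intro x y hxy hy
    exact h1 x.swap y.swap ⟨hxy.2, hxy.1⟩ hy

lemma Step_subset {S S' : Set (ℤ × ℤ)} (h : Relation.ReflTransGen Step S S') : S' ⊆ S := by
  induction h with
  | refl => exact subset_rfl
  | tail _ h ih =>
    obtain ⟨-, -, a, b, rfl, -⟩ := h
    exact sdiff_subset.trans ih

lemma SDR_steps {S S' : Set (ℤ × ℤ)} (h : Relation.ReflTransGen Step S S') :
    SDR (Γ.cell S) (Γ.cell S') := by
  induction h with
  | refl => exact SDR_refl _
  | tail h h' ih =>
    refine SDR_trans ?_ ?_ ih (Γ.SDR_step h')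
    · intro p hp
      exact Step_subset (.single h') hp
    · intro p hp
      exact Step_subset h hp

/-! connectivity -/

lemma preconn_cell (a : ℤ × ℤ) : IsPreconnected (Γ.cell {a}) := by
  have key : ∀ m, Convex ℝ {x : ℝ | Γ.ix x = m} := by
    intro m
    rcases Int.even_or_odd' m with ⟨k, hk | hk⟩
    · have : {x : ℝ | Γ.ix x = m} = {Γ.g k} := by
        ext x; rw [hk]; exact Γ.ix_even k x
      rw [this]; exact convex_singleton _
    · have : {x : ℝ | Γ.ix x = m} = Ioo (Γ.g k) (Γ.g (k + 1)) := by
        ext x; rw [hk]; exact Γ.ix_odd k x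
      rw [this]; exact convex_Ioo _ _
  have : Γ.cell {a} = (fun p : Plane => p 0) ⁻¹' {x | Γ.ix x = a.1} ∩
      (fun p : Plane => p 1) ⁻¹' {x | Γ.ix x = a.2} := by
    ext p
    simp [cell, idx, Prod.ext_iff]
  rw [this]
  exact (((key a.1).linear_preimage
      (LinearMap.proj (R := ℝ) (φ := fun _ : Fin 2 => ℝ) 0)).inter
    ((key a.2).linear_preimage
      (LinearMap.proj (R := ℝ) (φ := fun _ : Fin 2 => ℝ) 1))).isPreconnected

lemma mem_closure_cell {p : Plane} {b : ℤ × ℤ} (h : cstar (Γ.idx p) b) :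
    p ∈ closure (Γ.cell {b}) := by
  have key : ∀ x m, cstar1 (Γ.ix x) m → x ∈ closure {y : ℝ | Γ.ix y = m} := by
    intro x m hx
    rcases hx with rfl | ⟨h0, h1⟩
    · exact subset_closure rfl
    · obtain ⟨k, hk⟩ : ∃ k, Γ.ix x = 2 * k := ⟨Γ.ix x / 2, by omega⟩
      have hxk := (Γ.ix_even k x).1 hk
      rcases h1 with rfl | rfl
      · have : {y : ℝ | Γ.ix y = Γ.ix x + 1} = Ioo (Γ.g k) (Γ.g (k + 1)) := by
          ext y; rw [hk]; exact Γ.ix_odd k y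
        have h3 : Γ.g k < Γ.g (k + 1) := Γ.mono (by omega)
        rw [this, closure_Ioo h3.ne]
        exact ⟨hxk.ge, by rw [hxk]; exact h3.le⟩
      · have : {y : ℝ | Γ.ix y = Γ.ix x - 1} = Ioo (Γ.g (k - 1)) (Γ.g (k - 1 + 1)) := by
          ext y; rw [hk, show 2 * k - 1 = 2 * (k - 1) + 1 by ring]; exact Γ.ix_odd (k - 1) y
        have h3 : Γ.g (k - 1) < Γ.g (k - 1 + 1) := Γ.mono (by omega)
        rw [this, closure_Ioo h3.ne]
        rw [sub_add_cancel] at h3 ⊢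
        exact ⟨by rw [hxk]; exact h3.le, hxk.le⟩
  have e : Γ.cell {b} = Set.pi univ (fun i : Fin 2 => {y : ℝ | Γ.ix y = ![b.1, b.2] i}) := by
    ext q
    simp [cell, idx, Prod.ext_iff, Fin.forall_fin_two]
  rw [e, mem_closure_pi]
  intro i _
  fin_cases i
  · exact key _ _ h.1
  · exact key _ _ h.2

lemma exists_of_mem_closure {p : Plane} {S : Set (ℤ × ℤ)} (h : p ∈ closure (Γ.cell S)) :
    ∃ b ∈ S, cstar (Γ.idx p) b := by
  rw [mem_closure_iff_frequently] at h
  obtain ⟨q, hq, hq'⟩ := (h.and_eventually (Γ.near p)).exists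
  exact ⟨_, hq, hq'⟩

lemma conn_const {S : Set (ℤ × ℤ)} (hS : LC S) {T : Set Plane} (hT : IsPreconnected T)
    (hTS : T ⊆ Γ.cell S) {f : ℤ × ℤ → Prop} (hf : Inv4 S f) {p q : Plane} (hp : p ∈ T)
    (hq : q ∈ T) : f (Γ.idx p) ↔ f (Γ.idx q) := by
  classical
  have hcont : ContinuousOn (fun p => decide (f (Γ.idx p))) T := by
    intro x hx
    refine ContinuousWithinAt.congr_of_eventuallyEq (continuousWithinAt_const
      (b := decide (f (Γ.idx x)))) ?_ rfl
    filter_upwards [mem_nhdsWithin_of_mem_nhds (Γ.near x), self_mem_nhdsWithin] with y hy hyT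
    have h1 : Γ.idx x ∈ S := hTS hx
    have h2 : Γ.idx y ∈ S := hTS hyT
    simp only [decide_eq_decide]
    generalize Γ.idx x = a at *
    generalize Γ.idx y = b at *
    obtain ⟨m, n⟩ := a
    obtain ⟨m', n'⟩ := b
    have h3 : (m', n) ∈ S := hS (m, n) (m', n) (m', n') ⟨hy.1, Or.inl rfl⟩ ⟨Or.inl rfl, hy.2⟩ h1 h2
    have e1 : f (m, n) ↔ f (m', n) := by
      rcases hy.1 with h | ⟨-, h | h⟩ <;> simp only at h <;> subst h
      · rfl
      · exact (hf m n h1).1 h3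
      · have := (hf (m - 1) n h3).1
        rw [sub_add_cancel] at this
        exact (this h1).symm
    have e2 : f (m', n) ↔ f (m', n') := by
      rcases hy.2 with h | ⟨-, h | h⟩ <;> simp only at h <;> subst h
      · rfl
      · exact (hf m' n h3).2 h2
      · have := (hf m' (n - 1) h2).2
        rw [sub_add_cancel] at this
        exact (this h3).symm
    exact (e1.trans e2).symm
  have := hT.constant hcont hp hq
  simpa using this

lemma comp_star {S : Set (ℤ × ℤ)} {x p q : Plane} (hp : p ∈ connectedComponentIn (Γ.cell S) x)
    (hq : Γ.idx q ∈ S) (h : cstar (Γ.idx p) (Γ.idx q) ∨ cstar (Γ.idx q) (Γ.idx p)) :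
    q ∈ connectedComponentIn (Γ.cell S) x := by
  have hpS : p ∈ Γ.cell S := connectedComponentIn_subset _ _ hp
  rw [connectedComponentIn_eq hp]
  rcases h with h | h
  · have h1 : IsPreconnected (insert p (Γ.cell {Γ.idx q})) :=
      (Γ.preconn_cell _).subset_closure (subset_insert _ _)
        (insert_subset (Γ.mem_closure_cell h) subset_closure)
    refine h1.subset_connectedComponentIn (mem_insert _ _) ?_ (mem_insert_of_mem _ rfl)
    refine insert_subset hpS ?_
    intro y hy
    change Γ.idx y = Γ.idx q at hy
    change Γ.idx y ∈ S
    rwa [hy]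
  · have h1 : IsPreconnected (insert q (Γ.cell {Γ.idx p})) :=
      (Γ.preconn_cell _).subset_closure (subset_insert _ _)
        (insert_subset (Γ.mem_closure_cell h) subset_closure)
    refine h1.subset_connectedComponentIn (mem_insert_of_mem _ rfl) ?_ (mem_insert _ _)
    refine insert_subset hq ?_
    intro y hy
    change Γ.idx y = Γ.idx p at hy
    change Γ.idx y ∈ S
    rwa [hy]

end Grid


/-! ### Part 3: combinatorics of the cell complex -/

/-- vertices -/
def isV (a : ℤ × ℤ) : Prop := a.1 % 2 = 0 ∧ a.2 % 2 = 0
/-- edges -/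
def isE (a : ℤ × ℤ) : Prop := (a.1 + a.2) % 2 = 1
/-- squares -/
def isS (a : ℤ × ℤ) : Prop := a.1 % 2 = 1 ∧ a.2 % 2 = 1

/-- `f` agrees on the two endpoints of `e` -/
def EndsC (f : ℤ × ℤ → Prop) (e : ℤ × ℤ) : Prop :=
  ∀ u v, isV u → isV v → cstar u e → cstar v e → (f u ↔ f v)

/-- `c` agrees on the two sides of `e` -/
def SidesC (c : ℤ × ℤ → ZMod 2) (e : ℤ × ℤ) : Prop :=
  ∀ s s', isS s → isS s' → cstar e s → cstar e s' → c s = c s'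

lemma cstar_refl (a : ℤ × ℤ) : cstar a a := ⟨Or.inl rfl, Or.inl rfl⟩

lemma cstar_trans {a b c : ℤ × ℤ} (h1 : cstar a b) (h2 : cstar b c) : cstar a c := by
  simp only [cstar, cstar1] at *
  omega

lemma cstar_mk {a b c d : ℤ} (h1 : c = a ∨ (a % 2 = 0 ∧ (c = a + 1 ∨ c = a - 1)))
    (h2 : d = b ∨ (b % 2 = 0 ∧ (d = b + 1 ∨ d = b - 1))) : cstar (a, b) (c, d) := ⟨h1, h2⟩

lemma edge_vertex {e u : ℤ × ℤ} (he : isE e) (hu : isV u) (h : cstar u e) :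
    (e.1 % 2 = 1 ∧ e.2 % 2 = 0 ∧ u.2 = e.2 ∧ (u.1 = e.1 - 1 ∨ u.1 = e.1 + 1)) ∨
    (e.1 % 2 = 0 ∧ e.2 % 2 = 1 ∧ u.1 = e.1 ∧ (u.2 = e.2 - 1 ∨ u.2 = e.2 + 1)) := by
  obtain ⟨h1, h2⟩ := h
  obtain ⟨h3, h4⟩ := hu
  unfold isE at he
  rcases h1 with h1 | ⟨-, h1 | h1⟩ <;> rcases h2 with h2 | ⟨-, h2 | h2⟩ <;> omega

lemma edge_square {e s : ℤ × ℤ} (he : isE e) (hs : isS s) (h : cstar e s) :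
    (e.1 % 2 = 1 ∧ e.2 % 2 = 0 ∧ s.1 = e.1 ∧ (s.2 = e.2 - 1 ∨ s.2 = e.2 + 1)) ∨
    (e.1 % 2 = 0 ∧ e.2 % 2 = 1 ∧ s.2 = e.2 ∧ (s.1 = e.1 - 1 ∨ s.1 = e.1 + 1)) := by
  obtain ⟨h1, h2⟩ := h
  obtain ⟨h3, h4⟩ := hs
  unfold isE at he
  rcases h1 with h1 | ⟨-, h1 | h1⟩ <;> rcases h2 with h2 | ⟨-, h2 | h2⟩ <;> omega

lemma trichotomy (a : ℤ × ℤ) : isV a ∨ isE a ∨ isS a := by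
  simp only [isV, isE, isS]; omega

lemma Inv4_of_cstar {S : Set (ℤ × ℤ)} {f : ℤ × ℤ → Prop}
    (h : ∀ a b, a ∈ S → b ∈ S → cstar a b → (f a ↔ f b)) : Inv4 S f := by
  intro m n hmn
  constructor
  · intro h'
    rcases Int.emod_two_eq_zero_or_one m with hm | hm
    · exact h _ _ hmn h' (cstar_mk (by omega) (by omega))
    · exact (h _ _ h' hmn (cstar_mk (by omega) (by omega))).symm
  · intro h'
    rcases Int.emod_two_eq_zero_or_one n with hm | hm
    · exact h _ _ hmn h' (cstar_mk (by omega) (by omega))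
    · exact (h _ _ h' hmn (cstar_mk (by omega) (by omega))).symm

lemma exists_vertex (a : ℤ × ℤ) : ∃ v, isV v ∧ cstar v a :=
  ⟨(a.1 - a.1 % 2, a.2 - a.2 % 2), by simp only [isV]; omega,
    by simp only [cstar, cstar1]; omega⟩

lemma exists_square (a : ℤ × ℤ) : ∃ v, isS v ∧ cstar a v :=
  ⟨(a.1 + (1 - a.1 % 2), a.2 + (1 - a.2 % 2)), by simp only [isS]; omega,
    by simp only [cstar, cstar1]; omega⟩

lemma exists_ends {e : ℤ × ℤ} (he : isE e) :
    ∃ u v, isV u ∧ isV v ∧ cstar u e ∧ cstar v e ∧ u ≠ v := by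
  refine ⟨(e.1 - e.1 % 2, e.2 - e.2 % 2), (e.1 + e.1 % 2, e.2 + e.2 % 2), ?_⟩
  simp only [isV, cstar, cstar1, ne_eq, Prod.mk.injEq, isE] at *
  omega

lemma exists_sides {e : ℤ × ℤ} (he : isE e) :
    ∃ u v, isS u ∧ isS v ∧ cstar e u ∧ cstar e v ∧ u ≠ v := by
  refine ⟨(e.1 - (1 - e.1 % 2), e.2 - (1 - e.2 % 2)), (e.1 + (1 - e.1 % 2), e.2 + (1 - e.2 % 2)), ?_⟩
  simp only [isS, cstar, cstar1, ne_eq, Prod.mk.injEq, isE] at *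
  omega

lemma above_edge {e s s' x : ℤ × ℤ} (he : isE e) (hs : isS s) (hs' : isS s') (h : cstar e s)
    (h' : cstar e s') (hne : s ≠ s') (hx : cstar e x) : x = e ∨ x = s ∨ x = s' := by
  obtain ⟨e1, e2⟩ := e
  obtain ⟨s1, s2⟩ := s
  obtain ⟨t1, t2⟩ := s'
  obtain ⟨x1, x2⟩ := x
  have h1 := edge_square he hs h
  have h2 := edge_square he hs' h'
  obtain ⟨h3, h4⟩ := hx
  simp only [cstar1, ne_eq, Prod.mk.injEq] at *
  rcases h1 with ⟨a1, a2, rfl, a4⟩ | ⟨a1, a2, rfl, a4⟩ <;>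
    rcases h2 with ⟨b1, b2, rfl, b4⟩ | ⟨b1, b2, rfl, b4⟩ <;> omega

lemma below_edge {e s s' x : ℤ × ℤ} (he : isE e) (hs : isV s) (hs' : isV s') (h : cstar s e)
    (h' : cstar s' e) (hne : s ≠ s') (hx : cstar x e) : x = e ∨ x = s ∨ x = s' := by
  obtain ⟨e1, e2⟩ := e
  obtain ⟨s1, s2⟩ := s
  obtain ⟨t1, t2⟩ := s'
  obtain ⟨x1, x2⟩ := x
  have h1 := edge_vertex he hs h
  have h2 := edge_vertex he hs' h'
  obtain ⟨h3, h4⟩ := hx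
  simp only [cstar1, ne_eq, Prod.mk.injEq] at *
  rcases h1 with ⟨a1, a2, rfl, a4⟩ | ⟨a1, a2, rfl, a4⟩ <;>
    rcases h2 with ⟨b1, b2, rfl, b4⟩ | ⟨b1, b2, rfl, b4⟩ <;> omega

lemma below_vertex {v x : ℤ × ℤ} (hv : isV v) (h : cstar x v) : x = v := by
  obtain ⟨e1, e2⟩ := v
  obtain ⟨s1, s2⟩ := x
  simp only [isV, cstar, cstar1, Prod.mk.injEq] at *
  omega

lemma above_square {v x : ℤ × ℤ} (hv : isS v) (h : cstar v x) : x = v := by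
  obtain ⟨e1, e2⟩ := v
  obtain ⟨s1, s2⟩ := x
  simp only [isS, cstar, cstar1, Prod.mk.injEq] at *
  omega

lemma below_square {x y : ℤ} {w : ℤ × ℤ} (hw : isV w) (hs : isS (x, y)) (h : cstar w (x, y)) :
    w = (x - 1, y - 1) ∨ w = (x - 1, y + 1) ∨ w = (x + 1, y - 1) ∨ w = (x + 1, y + 1) := by
  obtain ⟨s1, s2⟩ := w
  simp only [isS, isV, cstar, cstar1, Prod.mk.injEq] at *
  omega

lemma square_corners {f : ℤ × ℤ → Prop} {s e : ℤ × ℤ} (hs : isS s) (he : isE e) (hes : cstar e s)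
    (h : ∀ e', e' ≠ e → isE e' → cstar e' s → EndsC f e') : EndsC f e := by
  obtain ⟨x, y⟩ := s
  obtain ⟨hx, hy⟩ := id hs
  simp only at hx hy
  have k1 : (x - 1, y) ≠ e → (f (x - 1, y - 1) ↔ f (x - 1, y + 1)) := by
    intro hne
    exact h _ hne (by simp only [isE]; omega) (cstar_mk (by omega) (by omega)) _ _
      (by simp only [isV]; omega) (by simp only [isV]; omega) (cstar_mk (by omega) (by omega)) (cstar_mk (by omega) (by omega))
  have k2 : (x + 1, y) ≠ e → (f (x + 1, y - 1) ↔ f (x + 1, y + 1)) := by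
    intro hne
    exact h _ hne (by simp only [isE]; omega) (cstar_mk (by omega) (by omega)) _ _
      (by simp only [isV]; omega) (by simp only [isV]; omega) (cstar_mk (by omega) (by omega)) (cstar_mk (by omega) (by omega))
  have k3 : (x, y - 1) ≠ e → (f (x - 1, y - 1) ↔ f (x + 1, y - 1)) := by
    intro hne
    exact h _ hne (by simp only [isE]; omega) (cstar_mk (by omega) (by omega)) _ _
      (by simp only [isV]; omega) (by simp only [isV]; omega) (cstar_mk (by omega) (by omega)) (cstar_mk (by omega) (by omega))
  have k4 : (x, y + 1) ≠ e → (f (x - 1, y + 1) ↔ f (x + 1, y + 1)) := by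
    intro hne
    exact h _ hne (by simp only [isE]; omega) (cstar_mk (by omega) (by omega)) _ _
      (by simp only [isV]; omega) (by simp only [isV]; omega) (cstar_mk (by omega) (by omega)) (cstar_mk (by omega) (by omega))
  have key : (f (x - 1, y - 1) ↔ f (x - 1, y + 1)) ∧ (f (x + 1, y - 1) ↔ f (x + 1, y + 1)) ∧
      (f (x - 1, y - 1) ↔ f (x + 1, y - 1)) := by
    have : ((x, y - 1) ≠ e ∧ (x, y + 1) ≠ e ∧ (x - 1, y) ≠ e) ∨
      ((x, y - 1) ≠ e ∧ (x, y + 1) ≠ e ∧ (x + 1, y) ≠ e) ∨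
      ((x, y - 1) ≠ e ∧ (x - 1, y) ≠ e ∧ (x + 1, y) ≠ e) ∨
      ((x, y + 1) ≠ e ∧ (x - 1, y) ≠ e ∧ (x + 1, y) ≠ e) := by
      obtain ⟨e1, e2⟩ := e
      simp only [ne_eq, Prod.mk.injEq]
      omega
    rcases this with ⟨i, j, k⟩ | ⟨i, j, k⟩ | ⟨i, j, k⟩ | ⟨i, j, k⟩
    · exact ⟨k1 k, ((k3 i).symm.trans (k1 k)).trans (k4 j), k3 i⟩
    · exact ⟨((k3 i).trans (k2 k)).trans (k4 j).symm, k2 k, k3 i⟩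
    · exact ⟨k1 j, k2 k, k3 i⟩
    · exact ⟨k1 j, k2 k, ((k1 j).trans (k4 i)).trans (k2 k).symm⟩
  obtain ⟨q1, q2, q3⟩ := key
  have all : ∀ w, isV w → cstar w (x, y) → (f w ↔ f (x - 1, y - 1)) := by
    intro w hw hwe
    rcases below_square hw hs hwe with rfl | rfl | rfl | rfl
    · exact Iff.rfl
    · exact q1.symm
    · exact q3.symm
    · exact (q3.trans q2).symm
  intro u v hu hv hue hve
  exact (all u hu (cstar_trans hue hes)).trans (all v hv (cstar_trans hve hes)).symm

lemma corners {f : ℤ × ℤ → Prop} {b : ℤ × ℤ} (h : ∀ e, isE e → cstar e b → EndsC f e)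
    {u v : ℤ × ℤ} (hu : isV u) (hv : isV v) (hub : cstar u b) (hvb : cstar v b) : f u ↔ f v := by
  rcases trichotomy b with hb | hb | hb
  · rw [below_vertex hb hub, below_vertex hb hvb]
  · exact h b hb (cstar_refl b) u v hu hv hub hvb
  · obtain ⟨x, y⟩ := b
    obtain ⟨hx, hy⟩ := id hb
    simp only at hx hy
    have k1 : f (x - 1, y - 1) ↔ f (x - 1, y + 1) := by
      exact h (x - 1, y) (by simp only [isE]; omega) (cstar_mk (by omega) (by omega)) _ _
        (by simp only [isV]; omega) (by simp only [isV]; omega)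
        (cstar_mk (by omega) (by omega)) (cstar_mk (by omega) (by omega))
    have k2 : f (x + 1, y - 1) ↔ f (x + 1, y + 1) := by
      exact h (x + 1, y) (by simp only [isE]; omega) (cstar_mk (by omega) (by omega)) _ _
        (by simp only [isV]; omega) (by simp only [isV]; omega)
        (cstar_mk (by omega) (by omega)) (cstar_mk (by omega) (by omega))
    have k3 : f (x - 1, y - 1) ↔ f (x + 1, y - 1) := by
      exact h (x, y - 1) (by simp only [isE]; omega) (cstar_mk (by omega) (by omega)) _ _
        (by simp only [isV]; omega) (by simp only [isV]; omega)
        (cstar_mk (by omega) (by omega)) (cstar_mk (by omega) (by omega))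
    rcases below_square hu hb hub with rfl | rfl | rfl | rfl <;>
    rcases below_square hv hb hvb with rfl | rfl | rfl | rfl <;> tauto

lemma above_vertex {x y : ℤ} {w : ℤ × ℤ} (hw : isS w) (hs : isV (x, y)) (h : cstar (x, y) w) :
    w = (x - 1, y - 1) ∨ w = (x - 1, y + 1) ∨ w = (x + 1, y - 1) ∨ w = (x + 1, y + 1) := by
  obtain ⟨s1, s2⟩ := w
  simp only [isS, isV, cstar, cstar1, Prod.mk.injEq] at *
  omega

lemma cocorners {c : ℤ × ℤ → ZMod 2} {b : ℤ × ℤ} (h : ∀ e, isE e → cstar b e → SidesC c e)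
    {u v : ℤ × ℤ} (hu : isS u) (hv : isS v) (hub : cstar b u) (hvb : cstar b v) : c u = c v := by
  rcases trichotomy b with hb | hb | hb
  · obtain ⟨x, y⟩ := b
    obtain ⟨hx, hy⟩ := id hb
    simp only at hx hy
    have k1 : c (x - 1, y - 1) = c (x - 1, y + 1) := by
      exact h (x - 1, y) (by simp only [isE]; omega) (cstar_mk (by omega) (by omega)) _ _
        (by simp only [isS]; omega) (by simp only [isS]; omega)
        (cstar_mk (by omega) (by omega)) (cstar_mk (by omega) (by omega))
    have k2 : c (x + 1, y - 1) = c (x + 1, y + 1) := by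
      exact h (x + 1, y) (by simp only [isE]; omega) (cstar_mk (by omega) (by omega)) _ _
        (by simp only [isS]; omega) (by simp only [isS]; omega)
        (cstar_mk (by omega) (by omega)) (cstar_mk (by omega) (by omega))
    have k3 : c (x - 1, y - 1) = c (x + 1, y - 1) := by
      exact h (x, y - 1) (by simp only [isE]; omega) (cstar_mk (by omega) (by omega)) _ _
        (by simp only [isS]; omega) (by simp only [isS]; omega)
        (cstar_mk (by omega) (by omega)) (cstar_mk (by omega) (by omega))
    rcases above_vertex hu hb hub with rfl | rfl | rfl | rfl <;>
    rcases above_vertex hv hb hvb with rfl | rfl | rfl | rfl <;> simp_all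
  · exact h b hb (cstar_refl b) u v hu hv hub hvb
  · rw [above_square hb hub, above_square hb hvb]

/-! chains mod 2 -/

/-- boundary of a 1-chain at a vertex -/
def bd (z : ℤ × ℤ → ZMod 2) (v : ℤ × ℤ) : ZMod 2 :=
  z (v.1 + 1, v.2) + z (v.1 - 1, v.2) + z (v.1, v.2 + 1) + z (v.1, v.2 - 1)

/-- indicator of a cell -/
def dl (u v : ℤ × ℤ) : ZMod 2 := if v = u then 1 else 0

lemma dl_self (u : ℤ × ℤ) : dl u u = 1 := if_pos rfl

lemma two_zero (x : ZMod 2) : x + x = 0 := by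
  revert x; decide

/-- `u` and `v` are joined by a 1-chain in `E` -/
def Chain (E : Set (ℤ × ℤ)) (u v : ℤ × ℤ) : Prop :=
  ∃ z : ℤ × ℤ → ZMod 2, (∀ a, z a ≠ 0 → isE a ∧ a ∈ E) ∧ ∀ w, isV w → bd z w = dl u w + dl v w

lemma Chain.refl (E : Set (ℤ × ℤ)) (u : ℤ × ℤ) : Chain E u u :=
  ⟨fun _ => 0, fun a h => absurd rfl h, fun w _ => by rw [two_zero]; simp [bd]⟩

lemma Chain.symm {E : Set (ℤ × ℤ)} {u v : ℤ × ℤ} (h : Chain E u v) : Chain E v u := by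
  obtain ⟨z, h1, h2⟩ := h
  exact ⟨z, h1, fun w hw => by rw [h2 w hw, add_comm]⟩

lemma Chain.trans {E : Set (ℤ × ℤ)} {u v w : ℤ × ℤ} (h : Chain E u v) (h' : Chain E v w) :
    Chain E u w := by
  obtain ⟨z, h1, h2⟩ := h
  obtain ⟨z', h1', h2'⟩ := h'
  refine ⟨fun a => z a + z' a, ?_, ?_⟩
  · intro a ha
    by_cases hz : z a = 0
    · apply h1'
      intro h0
      apply ha
      simp [hz, h0]
    · exact h1 a hz
  · intro x hx
    have e1 := h2 x hx
    have e2 := h2' x hx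
    have e3 := two_zero (dl v x)
    simp only [bd] at *
    linear_combination e1 + e2 + e3

lemma Chain.mono {E E' : Set (ℤ × ℤ)} (hE : E ⊆ E') {u v : ℤ × ℤ} (h : Chain E u v) :
    Chain E' u v := by
  obtain ⟨z, h1, h2⟩ := h
  exact ⟨z, fun a ha => ⟨(h1 a ha).1, hE (h1 a ha).2⟩, h2⟩

lemma bd_dl {e u v : ℤ × ℤ} (he : isE e) (hu : isV u) (hv : isV v) (hue : cstar u e)
    (hve : cstar v e) (hne : u ≠ v) (w : ℤ × ℤ) (hw : isV w) : bd (dl e) w = dl u w + dl v w := by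
  obtain ⟨e1, e2⟩ := e
  obtain ⟨u1, u2⟩ := u
  obtain ⟨v1, v2⟩ := v
  obtain ⟨x, y⟩ := w
  have i1 := edge_vertex he hu hue
  have i2 := edge_vertex he hv hve
  clear hue hve he hu hv
  simp only [bd, dl, Prod.mk.injEq, isV, ne_eq] at *
  have hcase : (u1 = e1 - 1 ∧ v1 = e1 + 1 ∧ u2 = e2 ∧ v2 = e2 ∧ e1 % 2 = 1) ∨
    (u1 = e1 + 1 ∧ v1 = e1 - 1 ∧ u2 = e2 ∧ v2 = e2 ∧ e1 % 2 = 1) ∨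
    (u2 = e2 - 1 ∧ v2 = e2 + 1 ∧ u1 = e1 ∧ v1 = e1 ∧ e2 % 2 = 1) ∨
    (u2 = e2 + 1 ∧ v2 = e2 - 1 ∧ u1 = e1 ∧ v1 = e1 ∧ e2 % 2 = 1) := by
    rcases i1 with ⟨a1, a2, a3, a4 | a4⟩ | ⟨a1, a2, a3, a4 | a4⟩ <;>
      rcases i2 with ⟨b1, b2, b3, b4 | b4⟩ | ⟨b1, b2, b3, b4 | b4⟩ <;> omega
  rcases hcase with ⟨rfl, rfl, rfl, rfl, h⟩ | ⟨rfl, rfl, rfl, rfl, h⟩ | ⟨rfl, rfl, rfl, rfl, h⟩ |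
    ⟨rfl, rfl, rfl, rfl, h⟩
  · rw [if_neg (show ¬ (x = e1 ∧ y + 1 = v2) by omega),
      if_neg (show ¬ (x = e1 ∧ y - 1 = v2) by omega),
      if_congr (show (x + 1 = e1 ∧ y = v2) ↔ (x = e1 - 1 ∧ y = v2) by omega) rfl rfl,
      if_congr (show (x - 1 = e1 ∧ y = v2) ↔ (x = e1 + 1 ∧ y = v2) by omega) rfl rfl]
    ring
  · rw [if_neg (show ¬ (x = e1 ∧ y + 1 = v2) by omega),
      if_neg (show ¬ (x = e1 ∧ y - 1 = v2) by omega),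
      if_congr (show (x + 1 = e1 ∧ y = v2) ↔ (x = e1 - 1 ∧ y = v2) by omega) rfl rfl,
      if_congr (show (x - 1 = e1 ∧ y = v2) ↔ (x = e1 + 1 ∧ y = v2) by omega) rfl rfl]
    ring
  · rw [if_neg (show ¬ (x + 1 = v1 ∧ y = e2) by omega),
      if_neg (show ¬ (x - 1 = v1 ∧ y = e2) by omega),
      if_congr (show (x = v1 ∧ y + 1 = e2) ↔ (x = v1 ∧ y = e2 - 1) by omega) rfl rfl,
      if_congr (show (x = v1 ∧ y - 1 = e2) ↔ (x = v1 ∧ y = e2 + 1) by omega) rfl rfl]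
    ring
  · rw [if_neg (show ¬ (x + 1 = v1 ∧ y = e2) by omega),
      if_neg (show ¬ (x - 1 = v1 ∧ y = e2) by omega),
      if_congr (show (x = v1 ∧ y + 1 = e2) ↔ (x = v1 ∧ y = e2 - 1) by omega) rfl rfl,
      if_congr (show (x = v1 ∧ y - 1 = e2) ↔ (x = v1 ∧ y = e2 + 1) by omega) rfl rfl]
    ring

lemma Chain.edge {E : Set (ℤ × ℤ)} {e u v : ℤ × ℤ} (he : isE e) (heE : e ∈ E) (hu : isV u)
    (hv : isV v) (hue : cstar u e) (hve : cstar v e) : Chain E u v := by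
  by_cases hne : u = v
  · rw [hne]; exact Chain.refl _ _
  · refine ⟨dl e, ?_, bd_dl he hu hv hue hve hne⟩
    intro a ha
    have : a = e := by
      by_contra h
      exact ha (if_neg h)
    rw [this]
    exact ⟨he, heE⟩

/-- a closed 1-chain in the plane bounds -/
lemma primitive (z : ℤ × ℤ → ZMod 2) (hz : ∀ a, z a ≠ 0 → isE a ∧ 1 ≤ a.1)
    (hb : ∀ v, isV v → bd z v = 0) :
    ∃ c : ℤ × ℤ → ZMod 2, ∀ e s s', isE e → isS s → isS s' → cstar e s → cstar e s' → s ≠ s' →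
      c s + c s' = z e := by
  have hz1 : ∀ m n : ℤ, m ≤ 0 → z (m, n) = 0 := by
    intro m n h
    by_contra h'
    have := (hz _ h').2
    simp only at this
    omega
  have hz2 : ∀ m n : ℤ, (m + n) % 2 = 0 → z (m, n) = 0 := by
    intro m n h
    by_contra h'
    have := (hz _ h').1
    simp only [isE] at this
    omega
  let c : ℤ × ℤ → ZMod 2 := fun a => ∑ k ∈ Finset.Icc 1 a.1, z (k, a.2)
  have hc0 : ∀ m n, m ≤ 0 → c (m, n) = 0 := by
    intro m n h
    simp only [c]
    rw [Finset.Icc_eq_empty (by omega)]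
    rfl
  have hstep : ∀ m n, c (m, n) = c (m - 1, n) + z (m, n) := by
    intro m n
    by_cases h : m ≤ 0
    · rw [hc0 _ _ h, hc0 _ _ (by omega), hz1 _ _ h]; rfl
    · have : Finset.Icc 1 m = insert m (Finset.Icc 1 (m - 1)) := by
        ext k; simp only [Finset.mem_Icc, Finset.mem_insert]; omega
      simp only [c]
      rw [this, Finset.sum_insert (by simp), add_comm]
  have hvert : ∀ m n, m % 2 = 0 → n % 2 = 1 → c (m + 1, n) + c (m - 1, n) = z (m, n) := by
    intro m n hm hn
    have h1 := hstep (m + 1) n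
    rw [hz2 (m + 1) n (by omega), add_sub_cancel_right] at h1
    have h2 := hstep m n
    have := two_zero (c (m - 1, n))
    linear_combination h1 + h2 + this
  have hhor' : ∀ (j : ℕ) (n : ℤ), n % 2 = 0 →
      c (2 * (j : ℤ) - 1, n + 1) + c (2 * (j : ℤ) - 1, n - 1) = z (2 * (j : ℤ) - 1, n) := by
    intro j n hn
    induction j with
    | zero =>
      rw [hc0 _ _ (by simp), hc0 _ _ (by simp), hz1 _ _ (by simp)]; rfl
    | succ j ih =>
      have e1 := hvert (2 * (j : ℤ)) (n + 1) (by omega) (by omega)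
      have e2 := hvert (2 * (j : ℤ)) (n - 1) (by omega) (by omega)
      have e3 := hb (2 * (j : ℤ), n) ⟨by simp, hn⟩
      have e4 : (2 * ((j + 1 : ℕ) : ℤ) - 1) = 2 * (j : ℤ) + 1 := by push_cast; ring
      rw [e4]
      simp only [bd] at e3
      have t1 := two_zero (c (2 * (j : ℤ) - 1, n + 1))
      have t2 := two_zero (c (2 * (j : ℤ) - 1, n - 1))
      have t3 := two_zero (z (2 * (j : ℤ) + 1, n))
      have t4 := two_zero (z (2 * (j : ℤ), n + 1))
      have t5 := two_zero (z (2 * (j : ℤ), n - 1))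
      have t6 := two_zero (z (2 * (j : ℤ) - 1, n))
      linear_combination e1 + e2 + e3 + ih - t1 - t2 - t3
  have hhor : ∀ m n, m % 2 = 1 → n % 2 = 0 → c (m, n + 1) + c (m, n - 1) = z (m, n) := by
    intro m n hm hn
    by_cases h : m ≤ 0
    · rw [hc0 _ _ h, hc0 _ _ h, hz1 _ _ h]; rfl
    · have := hhor' ((m + 1) / 2).toNat n hn
      rwa [show 2 * ((((m + 1) / 2).toNat : ℕ) : ℤ) - 1 = m by omega] at this
  refine ⟨c, ?_⟩
  rintro ⟨e1, e2⟩ ⟨s1, s2⟩ ⟨t1, t2⟩ he hs hs' h h' hne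
  have i1 := edge_square he hs h
  have i2 := edge_square he hs' h'
  clear he hs hs' h h'
  simp only [ne_eq, Prod.mk.injEq] at i1 i2 hne
  have hcase : (e1 % 2 = 1 ∧ e2 % 2 = 0 ∧ s1 = e1 ∧ t1 = e1 ∧ s2 = e2 + 1 ∧ t2 = e2 - 1) ∨
    (e1 % 2 = 1 ∧ e2 % 2 = 0 ∧ s1 = e1 ∧ t1 = e1 ∧ s2 = e2 - 1 ∧ t2 = e2 + 1) ∨
    (e1 % 2 = 0 ∧ e2 % 2 = 1 ∧ s1 = e1 + 1 ∧ t1 = e1 - 1 ∧ s2 = e2 ∧ t2 = e2) ∨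
    (e1 % 2 = 0 ∧ e2 % 2 = 1 ∧ s1 = e1 - 1 ∧ t1 = e1 + 1 ∧ s2 = e2 ∧ t2 = e2) := by
    rcases i1 with ⟨a1, a2, a3, a4 | a4⟩ | ⟨a1, a2, a3, a4 | a4⟩ <;>
      rcases i2 with ⟨b1, b2, b3, b4 | b4⟩ | ⟨b1, b2, b3, b4 | b4⟩ <;> omega
  rcases hcase with ⟨h1, h2, h3, h4, h5, h6⟩ | ⟨h1, h2, h3, h4, h5, h6⟩ | ⟨h1, h2, h3, h4, h5, h6⟩ |
    ⟨h1, h2, h3, h4, h5, h6⟩ <;> rw [h3, h4, h5, h6]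
  · exact hhor _ _ h1 h2
  · rw [add_comm]; exact hhor _ _ h1 h2
  · exact hvert _ _ h1 h2
  · rw [add_comm]; exact hvert _ _ h1 h2


/-! ### Part 4: the combinatorial theorem -/

/-- combinatorial hypotheses on the foreground `A`, the ground truth `K`, the component `C` -/
structure Combi (A K C : Set (ℤ × ℤ)) : Prop where
  dcA : DC A
  dcK : DC K
  pos : ∀ a ∈ A, 1 ≤ a.1
  fin : A.Finite
  rcA1 : ∀ m n, (m, n) ∈ A → m % 2 = 0 → (m + 1, n) ∈ A ∨ (m - 1, n) ∈ A
  rcA2 : ∀ m n, (m, n) ∈ A → n % 2 = 0 → (m, n + 1) ∈ A ∨ (m, n - 1) ∈ A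
  nd1 : ∀ m n, m % 2 = 0 → n % 2 = 0 → (m + 1, n + 1) ∈ A → (m - 1, n - 1) ∈ A →
    (m + 1, n - 1) ∈ A ∨ (m - 1, n + 1) ∈ A
  nd2 : ∀ m n, m % 2 = 0 → n % 2 = 0 → (m + 1, n - 1) ∈ A → (m - 1, n + 1) ∈ A →
    (m + 1, n + 1) ∈ A ∨ (m - 1, n - 1) ∈ A
  CA : C ⊆ A
  CK : ∀ a ∈ C, a ∉ K
  adj : ∀ a b, a ∈ C → b ∈ A → b ∉ K → cstar a b ∨ cstar b a → b ∈ C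
  conn : ∀ f, Inv4 C f → ∀ a b, a ∈ C → b ∈ C → (f a ↔ f b)
  tn_ex : ∃ e d, e ∈ C ∧ isE e ∧ isS d ∧ cstar e d ∧ d ∉ A
  tn_un : ∀ e e' d d', e ∈ C → e' ∈ C → isE e → isE e' → isS d → isS d' → cstar e d →
    cstar e' d' → d ∉ A → d' ∉ A → ∀ f, Inv4 {a | a ∉ A ∧ a ∉ K} f → (f d ↔ f d')
  tp_ex : ∃ a b, a ∈ C ∧ b ∈ A ∧ b ∉ C ∧ cstar b a
  tp_un : ∀ e e' v v', e ∈ C → e' ∈ C → isE e → isE e' → isV v → isV v' → cstar v e →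
    cstar v' e' → v ∈ A → v ∈ K → v' ∈ A → v' ∈ K → ∀ f, Inv4 (A ∩ K) f → (f v ↔ f v')

/-- stage one invariant -/
structure I1 (A C R : Set (ℤ × ℤ)) : Prop where
  st : Relation.ReflTransGen Step A (A \ R)
  dc : DC (A \ R)
  RC : R ⊆ C
  nv : ∀ a ∈ R, ¬ isV a
  i2 : ∀ (c : ℤ × ℤ → ZMod 2) (t : ZMod 2),
    (∀ e d, e ∈ C → isE e → isS d → cstar e d → d ∉ A → c d = t) →
    (∀ e ∈ R, isE e → SidesC c e) → ∀ s ∈ R, isS s → c s = t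
  i3 : ∀ f : ℤ × ℤ → Prop, (∀ v, v ∉ C → f v) →
    (∀ e, e ∈ C → e ∉ R → isE e → EndsC f e) → ∀ e ∈ C, isE e → EndsC f e

lemma exists_max {A : Set (ℤ × ℤ)} (hA : A.Finite) (I : Set (ℤ × ℤ) → Prop) (R0 : Set (ℤ × ℤ))
    (h0 : I R0) (hI : ∀ R, I R → R ⊆ A) : ∃ R, I R ∧ ∀ R', I R' → R ⊆ R' → R' ⊆ R := by
  have hf : {R | I R}.Finite := hA.finite_subsets.subset hI
  obtain ⟨R, hR⟩ := hf.exists_maximal ⟨R0, h0⟩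
  exact ⟨R, hR.1, fun R' h h' => hR.2 h h'⟩

lemma isE_not_isV {a : ℤ × ℤ} (h : isE a) : ¬ isV a := by
  simp only [isE, isV] at *; omega

lemma isS_not_isV {a : ℤ × ℤ} (h : isS a) : ¬ isV a := by
  simp only [isS, isV] at *; omega

lemma isE_not_isS {a : ℤ × ℤ} (h : isE a) : ¬ isS a := by
  simp only [isE, isS] at *; omega

namespace Combi

variable {A K C : Set (ℤ × ℤ)} (H : Combi A K C)

lemma up (H : Combi A K C) {a b : ℤ × ℤ} (ha : a ∈ C) (hb : b ∈ A) (hab : cstar a b) : b ∈ C :=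
  H.adj a b ha hb (fun h => H.CK a ha (H.dcK _ _ hab h)) (Or.inl hab)

lemma dcAC (H : Combi A K C) : DC (A \ C) := fun a b hab hb =>
  ⟨H.dcA a b hab hb.1, fun ha => hb.2 (H.up ha hb.1 hab)⟩

lemma I1_empty (H : Combi A K C) : I1 A C ∅ where
  st := by rw [sdiff_empty]
  dc := by rw [sdiff_empty]; exact H.dcA
  RC := empty_subset _
  nv := fun a h => absurd h (notMem_empty a)
  i2 := fun c t _ _ s h => absurd h (notMem_empty s)
  i3 := fun f _ h e he => h e he (notMem_empty e)

lemma I1_grow (H : Combi A K C) {R : Set (ℤ × ℤ)} (h : I1 A C R) {s s' e : ℤ × ℤ} (hs : s ∈ C)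
    (hsR : s ∉ R) (hsS : isS s) (he : e ∈ C) (heE : isE e) (hes : cstar e s) (hsS' : isS s')
    (hes' : cstar e s') (hne : s ≠ s') (hs' : s' ∈ R ∨ s' ∉ A) : I1 A C (R ∪ {s, e}) := by
  have heR : e ∉ R := (h.dc e s hes ⟨H.CA hs, hsR⟩).2
  have hset : A \ (R ∪ {s, e}) = (A \ R) \ {s, e} := by rw [sdiff_sdiff]
  have hdc : DC (A \ (R ∪ {s, e})) := by
    rw [hset]
    intro a b hab hb
    refine ⟨h.dc a b hab hb.1, ?_⟩
    rintro (rfl | rfl)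
    · rw [above_square hsS hab] at hb
      exact hb.2 (Or.inl rfl)
    · rcases above_edge heE hsS hsS' hes hes' hne hab with rfl | rfl | rfl
      · exact hb.2 (Or.inr rfl)
      · exact hb.2 (Or.inl rfl)
      · rcases hs' with h' | h'
        · exact hb.1.2 h'
        · exact h' hb.1.1
  refine ⟨h.st.tail ⟨h.dc, hdc, e, s, hset, ⟨H.CA hs, hsR⟩, ?_⟩, hdc, ?_, ?_, ?_, ?_⟩
  · obtain ⟨k1, k2⟩ := hsS
    rcases edge_square heE ⟨k1, k2⟩ hes with ⟨a1, a2, a3, a4⟩ | ⟨a1, a2, a3, a4⟩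
    · right; omega
    · left; omega
  · rintro a (ha | rfl | rfl)
    · exact h.RC ha
    · exact hs
    · exact he
  · rintro a (ha | rfl | rfl)
    · exact h.nv a ha
    · exact isS_not_isV hsS
    · exact isE_not_isV heE
  · intro c t hc hR x hx hxS
    have old := h.i2 c t hc (fun e' he' => hR e' (Or.inl he'))
    rcases hx with hx | rfl | rfl
    · exact old x hx hxS
    · rw [hR e (Or.inr (Or.inr rfl)) heE x s' hsS hsS' hes hes']
      rcases hs' with h' | h'
      · exact old s' h' hsS'
      · exact hc e s' he heE hsS' hes' h'
    · exact absurd hxS (isE_not_isS heE)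
  · intro f hf hR
    apply h.i3 f hf
    intro x hx hxR hxE
    by_cases hxe : x = e
    · rw [hxe]
      apply square_corners hsS heE hes
      intro e' hne' heE' hes'
      have hA' := h.dc e' s hes' ⟨H.CA hs, hsR⟩
      by_cases heC : e' ∈ C
      · apply hR e' heC _ heE'
        rintro (h' | rfl | rfl)
        · exact hA'.2 h'
        · exact isE_not_isS heE' hsS
        · exact hne' rfl
      · intro u v _ _ hu hv
        exact iff_of_true (hf u fun h' => heC (H.up h' hA'.1 hu))
          (hf v fun h' => heC (H.up h' hA'.1 hv))
    · apply hR x hx _ hxE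
      rintro (h' | rfl | rfl)
      · exact hxR h'
      · exact isE_not_isS hxE hsS
      · exact hxe rfl

lemma exists_A_square (H : Combi A K C) {a : ℤ × ℤ} (ha : a ∈ A) :
    ∃ s ∈ A, isS s ∧ cstar a s := by
  obtain ⟨m, n⟩ := a
  obtain ⟨m', hm', hmo, hmc⟩ : ∃ m', (m', n) ∈ A ∧ m' % 2 = 1 ∧ cstar1 m m' := by
    rcases Int.emod_two_eq_zero_or_one m with hm | hm
    · rcases H.rcA1 m n ha hm with h | h
      · exact ⟨m + 1, h, by omega, Or.inr ⟨hm, Or.inl rfl⟩⟩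
      · exact ⟨m - 1, h, by omega, Or.inr ⟨hm, Or.inr rfl⟩⟩
    · exact ⟨m, ha, hm, Or.inl rfl⟩
  rcases Int.emod_two_eq_zero_or_one n with hn | hn
  · rcases H.rcA2 m' n hm' hn with h | h
    · exact ⟨(m', n + 1), h, ⟨hmo, by simp only; omega⟩, hmc, Or.inr ⟨hn, Or.inl rfl⟩⟩
    · exact ⟨(m', n - 1), h, ⟨hmo, by simp only; omega⟩, hmc, Or.inr ⟨hn, Or.inr rfl⟩⟩
  · exact ⟨(m', n), hm', ⟨hmo, hn⟩, hmc, Or.inl rfl⟩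

lemma prop16 {a1 a2 a3 a4 r1 r2 r3 r4 : Prop} (h12 : a1 → a2 → (r1 ↔ r2))
    (h34 : a3 → a4 → (r3 ↔ r4)) (h13 : a1 → a3 → (r1 ↔ r3)) (h24 : a2 → a4 → (r2 ↔ r4))
    (n1 : a4 → a1 → a3 ∨ a2) (n2 : a3 → a2 → a4 ∨ a1) :
    (a1 → a2 → r1 → r2) ∧ (a1 → a3 → r1 → r3) ∧ (a1 → a4 → r1 → r4) ∧
    (a2 → a1 → r2 → r1) ∧ (a2 → a3 → r2 → r3) ∧ (a2 → a4 → r2 → r4) ∧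
    (a3 → a1 → r3 → r1) ∧ (a3 → a2 → r3 → r2) ∧ (a3 → a4 → r3 → r4) ∧
    (a4 → a1 → r4 → r1) ∧ (a4 → a2 → r4 → r2) ∧ (a4 → a3 → r4 → r3) := by
  refine ⟨?_, ?_, ?_, ?_, ?_, ?_, ?_, ?_, ?_, ?_, ?_, ?_⟩ <;> grind

lemma stage1 (H : Combi A K C) : ∃ R, I1 A C R ∧ ∀ s ∈ C, isS s → s ∈ R := by
  obtain ⟨R, hR, hmax⟩ := exists_max H.fin (I1 A C) ∅ H.I1_empty
    (fun R h => h.RC.trans H.CA)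
  refine ⟨R, hR, ?_⟩
  have grow : ∀ s s' e, s ∈ A → isS s → isS s' → e ∈ C → isE e → cstar e s → cstar e s' →
      s ≠ s' → (s' ∈ R ∨ s' ∉ A) → s ∈ R := by
    intro s s' e hs hsS hsS' he heE h1 h2 hne h3
    by_contra hsR
    apply hsR
    exact hmax _ (H.I1_grow hR (H.up he hs h1) hsR hsS he heE h1 hsS' h2 hne h3)
      subset_union_left (Or.inr (Or.inl rfl))
  have pair : ∀ a e s s', a ∈ C → cstar a e → isE e → isS s → isS s' → cstar e s → cstar e s' →
      s ∈ A → s' ∈ A → (s ∈ R ↔ s' ∈ R) := by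
    intro a e s s' ha hae heE hs hs' h1 h2 hsA hsA'
    by_cases hne : s = s'
    · rw [hne]
    · have he : e ∈ C := H.up ha (H.dcA e s h1 hsA) hae
      exact ⟨fun h => grow s' s e hsA' hs' hs he heE h2 h1 (Ne.symm hne) (Or.inl h),
        fun h => grow s s' e hsA hs hs' he heE h1 h2 hne (Or.inl h)⟩
  have same : ∀ a s s', a ∈ C → isS s → isS s' → cstar a s → cstar a s' → s ∈ A → s' ∈ A →
      s ∈ R → s' ∈ R := by
    intro a s s' ha hs hs' h1 h2 hsA hsA' hsR
    rcases trichotomy a with hV | hE | hS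
    · obtain ⟨x, y⟩ := a
      obtain ⟨hx, hy⟩ := id hV
      simp only at hx hy
      obtain ⟨q1, q2, q3, q4, q5, q6, q7, q8, q9, q10, q11, q12⟩ := prop16
        (pair (x, y) (x - 1, y) (x - 1, y - 1) (x - 1, y + 1) ha (cstar_mk (by omega) (by omega))
          (by simp only [isE]; omega) (by simp only [isS]; omega) (by simp only [isS]; omega)
          (cstar_mk (by omega) (by omega)) (cstar_mk (by omega) (by omega)))
        (pair (x, y) (x + 1, y) (x + 1, y - 1) (x + 1, y + 1) ha (cstar_mk (by omega) (by omega))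
          (by simp only [isE]; omega) (by simp only [isS]; omega) (by simp only [isS]; omega)
          (cstar_mk (by omega) (by omega)) (cstar_mk (by omega) (by omega)))
        (pair (x, y) (x, y - 1) (x - 1, y - 1) (x + 1, y - 1) ha (cstar_mk (by omega) (by omega))
          (by simp only [isE]; omega) (by simp only [isS]; omega) (by simp only [isS]; omega)
          (cstar_mk (by omega) (by omega)) (cstar_mk (by omega) (by omega)))
        (pair (x, y) (x, y + 1) (x - 1, y + 1) (x + 1, y + 1) ha (cstar_mk (by omega) (by omega))
          (by simp only [isE]; omega) (by simp only [isS]; omega) (by simp only [isS]; omega)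
          (cstar_mk (by omega) (by omega)) (cstar_mk (by omega) (by omega)))
        (H.nd1 x y hx hy) (H.nd2 x y hx hy)
      rcases above_vertex hs hV h1 with rfl | rfl | rfl | rfl <;>
      rcases above_vertex hs' hV h2 with rfl | rfl | rfl | rfl <;>
      first
      | exact hsR
      | exact q1 hsA hsA' hsR
      | exact q2 hsA hsA' hsR
      | exact q3 hsA hsA' hsR
      | exact q4 hsA hsA' hsR
      | exact q5 hsA hsA' hsR
      | exact q6 hsA hsA' hsR
      | exact q7 hsA hsA' hsR
      | exact q8 hsA hsA' hsR
      | exact q9 hsA hsA' hsR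
      | exact q10 hsA hsA' hsR
      | exact q11 hsA hsA' hsR
      | exact q12 hsA hsA' hsR
    · exact (pair a a s s' ha (cstar_refl a) hE hs hs' h1 h2 hsA hsA').1 hsR
    · rw [above_square hS h2, ← above_square hS h1]; exact hsR
  have hRA : ∀ s ∈ R, s ∈ A := fun s h => H.CA (hR.RC h)
  have hInv : Inv4 C (fun a => ∃ s ∈ R, isS s ∧ cstar a s) := by
    apply Inv4_of_cstar
    intro a b ha hb hab
    constructor
    · rintro ⟨s, hs, hsS, h1⟩
      obtain ⟨s', hs', hsS', h2⟩ := H.exists_A_square (H.CA hb)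
      exact ⟨s', same a s s' ha hsS hsS' h1 (cstar_trans hab h2) (hRA s hs) hs' hs, hsS', h2⟩
    · rintro ⟨s, hs, hsS, h1⟩
      exact ⟨s, hs, hsS, cstar_trans hab h1⟩
  obtain ⟨e, d, he, heE, hd, hed, hdA⟩ := H.tn_ex
  obtain ⟨s0, hs0, hsS0, h0⟩ := H.exists_A_square (H.CA he)
  have hs0R : s0 ∈ R := grow s0 d e hs0 hsS0 hd he heE h0 hed
    (fun h => hdA (h ▸ hs0)) (Or.inr hdA)
  intro s hs hsS
  obtain ⟨s', hs', -, h'⟩ := (H.conn _ hInv e s he hs).1 ⟨s0, hs0R, hsS0, h0⟩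
  rwa [above_square hsS h'] at hs'

end Combi

/-- vertices of `A ∩ K` next to `C` -/
def TPadj (A K C : Set (ℤ × ℤ)) (u : ℤ × ℤ) : Prop :=
  isV u ∧ u ∈ A ∧ u ∈ K ∧ ∃ e ∈ C, isE e ∧ cstar u e

/-- stage two invariant -/
structure I2 (A K C R W : Set (ℤ × ℤ)) : Prop where
  WC : W ⊆ C \ R
  dc : DC ((A \ C) ∪ W)
  st : Relation.ReflTransGen Step ((A \ C) ∪ W) (A \ C)
  ch : ∀ u u', isV u → isV u' → (u ∈ W ∨ TPadj A K C u) → (u' ∈ W ∨ TPadj A K C u') →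
    Chain (W ∪ (A ∩ K)) u u'

namespace Combi

variable {A K C : Set (ℤ × ℤ)}

lemma endpoint (H : Combi A K C) {e u : ℤ × ℤ} (he : e ∈ C) (heE : isE e) (hu : isV u)
    (hue : cstar u e) (huC : u ∉ C) : TPadj A K C u := by
  have huA : u ∈ A := H.dcA u e hue (H.CA he)
  refine ⟨hu, huA, ?_, e, he, heE, hue⟩
  by_contra hK
  exact huC (H.adj e u he huA hK (Or.inr hue))

lemma I2_empty (H : Combi A K C) (R : Set (ℤ × ℤ)) : I2 A K C R ∅ where
  WC := empty_subset _
  dc := by rw [union_empty]; exact H.dcAC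
  st := by rw [union_empty]
  ch := by
    intro u u' hu hu' h h'
    rw [empty_union]
    rcases h with h | ⟨-, huA, huK, e, he, heE, hue⟩
    · exact absurd h (notMem_empty u)
    rcases h' with h | ⟨-, huA', huK', e', he', heE', hue'⟩
    · exact absurd h (notMem_empty u')
    have hInv : Inv4 (A ∩ K) (fun a => ∃ w, isV w ∧ cstar w a ∧ Chain (A ∩ K) u w) := by
      apply Inv4_of_cstar
      intro a b ha hb hab
      constructor
      · rintro ⟨w, hw, h1, h2⟩
        exact ⟨w, hw, cstar_trans h1 hab, h2⟩
      · rintro ⟨w, hw, h1, h2⟩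
        obtain ⟨w', hw', h3⟩ := exists_vertex a
        refine ⟨w', hw', h3, ?_⟩
        refine (corners (f := Chain (A ∩ K) u) (b := b) ?_ hw hw' h1 (cstar_trans h3 hab)).1 h2
        intro e hE heb x y hx hy hxe hye
        have heM : e ∈ A ∩ K := ⟨H.dcA e b heb hb.1, H.dcK e b heb hb.2⟩
        exact ⟨fun h => h.trans (Chain.edge hE heM hx hy hxe hye),
          fun h => h.trans (Chain.edge hE heM hy hx hye hxe)⟩
    obtain ⟨w, hw, h1, h2⟩ := (H.tp_un e e' u u' he he' heE heE' hu hu' hue hue' huA huK huA' huK'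
      _ hInv).1 ⟨u, hu, cstar_refl u, Chain.refl _ _⟩
    rwa [below_vertex hu' h1] at h2

lemma I2_grow (H : Combi A K C) {R W : Set (ℤ × ℤ)} (hR : I1 A C R) (h : I2 A K C R W)
    {e u v : ℤ × ℤ} (he : e ∈ C) (heR : e ∉ R) (heW : e ∉ W) (heE : isE e) (hu : isV u)
    (hv : isV v) (hue : cstar u e) (hve : cstar v e) (huW : u ∈ W ∨ u ∉ C) (hvC : v ∈ C)
    (hvW : v ∉ W) : I2 A K C R (W ∪ {e, v}) := by
  have hne : u ≠ v := by
    rintro rfl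
    rcases huW with h' | h'
    · exact hvW h'
    · exact h' hvC
  have huA : u ∈ A := H.dcA u e hue (H.CA he)
  have hdc : DC ((A \ C) ∪ (W ∪ {e, v})) := by
    rw [← union_assoc]
    rintro a b hab (hb | rfl | rfl)
    · exact Or.inl (h.dc a b hab hb)
    · rcases below_edge heE hu hv hue hve hne hab with rfl | rfl | rfl
      · exact Or.inr (Or.inl rfl)
      · left
        rcases huW with h' | h'
        · exact Or.inr h'
        · exact Or.inl ⟨huA, h'⟩
      · exact Or.inr (Or.inr rfl)
    · rw [below_vertex hv hab]
      exact Or.inr (Or.inr rfl)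
  have hold : ∀ a ∈ ({e, v} : Set (ℤ × ℤ)), a ∉ (A \ C) ∪ W := by
    rintro a (rfl | rfl) (h' | h')
    · exact h'.2 he
    · exact heW h'
    · exact h'.2 hvC
    · exact hvW h'
  refine ⟨?_, hdc, ?_, ?_⟩
  · rintro a (ha | rfl | rfl)
    · exact h.WC ha
    · exact ⟨he, heR⟩
    · exact ⟨hvC, fun h' => hR.nv _ h' hv⟩
  · refine Relation.ReflTransGen.head ⟨hdc, h.dc, v, e, ?_, Or.inr (Or.inr (Or.inl rfl)), ?_⟩ h.st
    · ext a
      constructor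
      · intro ha
        refine ⟨?_, fun h' => hold a h' ha⟩
        rw [← union_assoc]
        exact Or.inl ha
      · rintro ⟨ha, h'⟩
        rw [← union_assoc] at ha
        rcases ha with ha | ha
        · exact ha
        · exact absurd ha h'
    · rcases edge_vertex heE hv hve with ⟨a1, a2, a3, a4⟩ | ⟨a1, a2, a3, a4⟩
      · left; omega
      · right; omega
  · have hu' : u ∈ W ∨ TPadj A K C u := by
      rcases huW with h' | h'
      · exact Or.inl h'
      · exact Or.inr (H.endpoint he heE hu hue h')
    have hsub : W ∪ (A ∩ K) ⊆ (W ∪ {e, v}) ∪ (A ∩ K) :=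
      union_subset_union_left _ subset_union_left
    have key : ∀ x, isV x → (x ∈ W ∪ {e, v} ∨ TPadj A K C x) →
        Chain ((W ∪ {e, v}) ∪ (A ∩ K)) u x := by
      rintro x hx ((hxW | rfl | rfl) | hxT)
      · exact (h.ch u x hu hx hu' (Or.inl hxW)).mono hsub
      · exact absurd hx (isE_not_isV heE)
      · exact Chain.edge heE (Or.inl (Or.inr (Or.inl rfl))) hu hx hue hve
      · exact (h.ch u x hu hx hu' (Or.inr hxT)).mono hsub
    intro x y hx hy hxW hyW
    exact (key x hx hxW).symm.trans (key y hy hyW)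

lemma stage2 (H : Combi A K C) {R : Set (ℤ × ℤ)} (hR : I1 A C R) :
    ∃ W, I2 A K C R W ∧ ∀ v ∈ C, isV v → v ∈ W := by
  obtain ⟨W, hW, hmax⟩ := exists_max H.fin (I2 A K C R) ∅ (H.I2_empty R)
    (fun W h => (h.WC.trans sdiff_subset).trans H.CA)
  refine ⟨W, hW, ?_⟩
  have one : ∀ e ∈ C, e ∉ R → isE e → ∀ u v, isV u → isV v → cstar u e → cstar v e →
      (u ∈ W ∨ u ∉ C) → (v ∈ W ∨ v ∉ C) := by
    intro e he heR heE u v hu hv hue hve h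
    by_contra hcon
    push Not at hcon
    by_cases heW : e ∈ W
    · rcases hW.dc v e hve (Or.inr heW) with h' | h'
      · exact h'.2 hcon.2
      · exact hcon.1 h'
    · exact hcon.1 (hmax _ (H.I2_grow hR hW he heR heW heE hu hv hue hve h hcon.2 hcon.1)
        subset_union_left (Or.inr (Or.inr rfl)))
  have ends := hR.i3 (fun x => x ∈ W ∨ x ∉ C) (fun v hv => Or.inr hv)
    (fun e he heR heE u v hu hv hue hve =>
      ⟨one e he heR heE u v hu hv hue hve, one e he heR heE v u hv hu hve hue⟩)
  have hInv : Inv4 C (fun a => ∃ w, isV w ∧ cstar w a ∧ (w ∈ W ∨ w ∉ C)) := by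
    apply Inv4_of_cstar
    intro a b ha hb hab
    constructor
    · rintro ⟨w, hw, h1, h2⟩
      exact ⟨w, hw, cstar_trans h1 hab, h2⟩
    · rintro ⟨w, hw, h1, h2⟩
      obtain ⟨w', hw', h3⟩ := exists_vertex a
      refine ⟨w', hw', h3, ?_⟩
      refine (corners (f := fun w => w ∈ W ∨ w ∉ C) (b := b) ?_ hw hw' h1
        (cstar_trans h3 hab)).1 h2
      intro e hE heb
      by_cases heC : e ∈ C
      · exact ends e heC hE
      · have heA : e ∈ A := H.dcA e b heb (H.CA hb)
        intro x y _ _ hx hy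
        exact iff_of_true (Or.inr fun h => heC (H.up h heA hx))
          (Or.inr fun h => heC (H.up h heA hy))
  obtain ⟨a, b, ha, hb, hbC, hba⟩ := H.tp_ex
  obtain ⟨w, hw, hwb⟩ := exists_vertex b
  intro v hv hvV
  obtain ⟨w', hw', h1, h2⟩ := (H.conn _ hInv a v ha hv).1
    ⟨w, hw, cstar_trans hwb hba, Or.inr fun h => hbC (H.up h hb hwb)⟩
  rw [below_vertex hvV h1] at h2
  rcases h2 with h2 | h2
  · exact h2
  · exact absurd hv h2

lemma zmod2_eq {x y : ZMod 2} (h : x + y = 0) : x = y := by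
  revert x y; decide

lemma stage3 (H : Combi A K C) {R W : Set (ℤ × ℤ)} (hR : I1 A C R) (hW : I2 A K C R W)
    (hRS : ∀ s ∈ C, isS s → s ∈ R) (hWV : ∀ v ∈ C, isV v → v ∈ W) {e : ℤ × ℤ} (he : e ∈ C)
    (heR : e ∉ R) (heE : isE e) : e ∈ W := by
  by_contra heW
  obtain ⟨u, v, hu, hv, hue, hve, hne⟩ := exists_ends heE
  have hgood : ∀ x, isV x → cstar x e → (x ∈ W ∨ TPadj A K C x) := by
    intro x hx hxe
    by_cases hxC : x ∈ C
    · exact Or.inl (hWV x hxC hx)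
    · exact Or.inr (H.endpoint he heE hx hxe hxC)
  obtain ⟨z, hz1, hz2⟩ := hW.ch u v hu hv (hgood u hu hue) (hgood v hv hve)
  have hze : z e = 0 := by
    by_contra h
    rcases (hz1 e h).2 with h' | h'
    · exact heW h'
    · exact H.CK e he h'.2
  let y : ℤ × ℤ → ZMod 2 := fun a => z a + dl e a
  have hy0 : ∀ a, a ≠ e → a ∉ W → a ∉ A ∩ K → y a = 0 := by
    intro a h1 h2 h3
    have h4 : z a = 0 := by
      by_contra h
      rcases (hz1 a h).2 with h' | h'
      · exact h2 h'
      · exact h3 h'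
    simp only [y, h4, dl, if_neg h1, add_zero]
  have hye : y e = 1 := by simp only [y, hze, dl_self, zero_add]
  have hyA : ∀ a, y a ≠ 0 → isE a ∧ a ∈ A := by
    intro a ha
    by_cases h1 : a = e
    · rw [h1]; exact ⟨heE, H.CA he⟩
    · have h4 : z a ≠ 0 := by
        intro h
        apply ha
        simp only [y, h, dl, if_neg h1, add_zero]
      refine ⟨(hz1 a h4).1, ?_⟩
      rcases (hz1 a h4).2 with h' | h'
      · exact H.CA (hW.WC h').1
      · exact h'.1
  obtain ⟨c, hc⟩ := primitive y (fun a ha => ⟨(hyA a ha).1, H.pos a (hyA a ha).2⟩) (by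
    intro w hw
    have e1 := hz2 w hw
    have e2 := bd_dl heE hu hv hue hve hne w hw
    have e3 := two_zero (dl u w)
    have e4 := two_zero (dl v w)
    simp only [bd, y] at *
    linear_combination e1 + e2 + e3 + e4)
  have sides : ∀ x, isE x → y x = 0 → SidesC c x := by
    intro x hx hyx s s' hs hs' h1 h2
    by_cases hss : s = s'
    · rw [hss]
    · exact zmod2_eq ((hc x s s' hx hs hs' h1 h2 hss).trans hyx)
  obtain ⟨e0, d0, he0, heE0, hd0, hed0, hdA0⟩ := H.tn_ex
  have hTN : ∀ x d, x ∈ C → isE x → isS d → cstar x d → d ∉ A → c d = c d0 := by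
    intro x d hx hxE hd hxd hdA
    have hInv : Inv4 {a | a ∉ A ∧ a ∉ K} (fun a => ∃ s, isS s ∧ cstar a s ∧ c s = c d0) := by
      apply Inv4_of_cstar
      intro a b ha hb hab
      constructor
      · rintro ⟨s, hs, h1, h2⟩
        obtain ⟨s', hs', h3⟩ := exists_square b
        refine ⟨s', hs', h3, ?_⟩
        rw [← h2]
        refine cocorners (b := a) ?_ hs' hs (cstar_trans hab h3) h1
        intro x' hxE' hax
        apply sides x' hxE'
        by_contra hne0
        exact ha.1 (H.dcA a x' hax (hyA x' hne0).2)
      · rintro ⟨s, hs, h1, h2⟩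
        exact ⟨s, hs, cstar_trans hab h1, h2⟩
    obtain ⟨s, hs, h1, h2⟩ := (H.tn_un e0 x d0 d he0 hx heE0 hxE hd0 hd hed0 hxd hdA0 hdA _ hInv).1
      ⟨d0, hd0, cstar_refl _, rfl⟩
    rwa [above_square hd h1] at h2
  have hall := hR.i2 c (c d0) hTN (by
    intro x hx hxE
    apply sides x hxE
    apply hy0
    · rintro rfl; exact heR hx
    · intro h; exact (hW.WC h).2 hx
    · intro h; exact H.CK x (hR.RC hx) h.2)
  have hside : ∀ s, isS s → cstar e s → c s = c d0 := by
    intro s hs hes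
    by_cases hsA : s ∈ A
    · exact hall s (hRS s (H.up he hsA hes) hs) hs
    · exact hTN e s he heE hs hes hsA
  obtain ⟨s, s', hs, hs', h1, h2, hss⟩ := exists_sides heE
  have := hc e s s' heE hs hs' h1 h2 hss
  rw [hside s hs h1, hside s' hs' h2, two_zero, hye] at this
  exact absurd this (by decide)

theorem main (H : Combi A K C) : Relation.ReflTransGen Step A (A \ C) := by
  obtain ⟨R, hR, hRS⟩ := H.stage1
  obtain ⟨W, hW, hWV⟩ := H.stage2 hR
  have hEq : (A \ C) ∪ W = A \ R := by
    ext a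
    constructor
    · rintro (h | h)
      · exact ⟨h.1, fun h' => h.2 (hR.RC h')⟩
      · exact ⟨H.CA (hW.WC h).1, (hW.WC h).2⟩
    · rintro ⟨h, h'⟩
      by_cases hC : a ∈ C
      · right
        rcases trichotomy a with hV | hE | hS
        · exact hWV a hC hV
        · exact H.stage3 hR hW hRS hWV hC h' hE
        · exact absurd (hRS a hC hS) h'
      · exact Or.inl ⟨h, hC⟩
  exact hR.st.trans (hEq ▸ hW.st)

end Combi

/-! ### Part 5: from components to combinatorics -/

/-- properties of the index sets of the two thickened foregrounds -/
structure Good (A K : Set (ℤ × ℤ)) : Prop where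
  dcA : DC A
  dcK : DC K
  pos : ∀ a ∈ A, 1 ≤ a.1
  fin : A.Finite
  rcA1 : ∀ m n, (m, n) ∈ A → m % 2 = 0 → (m + 1, n) ∈ A ∨ (m - 1, n) ∈ A
  rcA2 : ∀ m n, (m, n) ∈ A → n % 2 = 0 → (m, n + 1) ∈ A ∨ (m, n - 1) ∈ A
  rcK1 : ∀ m n, (m, n) ∈ K → m % 2 = 0 → (m + 1, n) ∈ K ∨ (m - 1, n) ∈ K
  rcK2 : ∀ m n, (m, n) ∈ K → n % 2 = 0 → (m, n + 1) ∈ K ∨ (m, n - 1) ∈ K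
  nd1 : ∀ m n, m % 2 = 0 → n % 2 = 0 → (m + 1, n + 1) ∈ A → (m - 1, n - 1) ∈ A →
    (m + 1, n - 1) ∈ A ∨ (m - 1, n + 1) ∈ A
  nd2 : ∀ m n, m % 2 = 0 → n % 2 = 0 → (m + 1, n - 1) ∈ A → (m - 1, n + 1) ∈ A →
    (m + 1, n + 1) ∈ A ∨ (m - 1, n - 1) ∈ A
  tr1 : ∀ m, m % 2 = 0 → (∀ n, (m - 1, n) ∈ A ↔ (m + 1, n) ∈ A) ∨
    (∀ n, (m - 1, n) ∈ K ↔ (m + 1, n) ∈ K)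
  tr2 : ∀ n, n % 2 = 0 → (∀ m, (m, n - 1) ∈ A ↔ (m, n + 1) ∈ A) ∨
    (∀ m, (m, n - 1) ∈ K ↔ (m, n + 1) ∈ K)

lemma exists_square_in {A : Set (ℤ × ℤ)}
    (rc1 : ∀ m n, (m, n) ∈ A → m % 2 = 0 → (m + 1, n) ∈ A ∨ (m - 1, n) ∈ A)
    (rc2 : ∀ m n, (m, n) ∈ A → n % 2 = 0 → (m, n + 1) ∈ A ∨ (m, n - 1) ∈ A)
    {a : ℤ × ℤ} (ha : a ∈ A) : ∃ s ∈ A, isS s ∧ cstar a s := by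
  obtain ⟨m, n⟩ := a
  obtain ⟨m', hm', hmo, hmc⟩ : ∃ m', (m', n) ∈ A ∧ m' % 2 = 1 ∧ cstar1 m m' := by
    rcases Int.emod_two_eq_zero_or_one m with hm | hm
    · rcases rc1 m n ha hm with h | h
      · exact ⟨m + 1, h, by omega, Or.inr ⟨hm, Or.inl rfl⟩⟩
      · exact ⟨m - 1, h, by omega, Or.inr ⟨hm, Or.inr rfl⟩⟩
    · exact ⟨m, ha, hm, Or.inl rfl⟩
  rcases Int.emod_two_eq_zero_or_one n with hn | hn
  · rcases rc2 m' n hm' hn with h | h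
    · exact ⟨(m', n + 1), h, ⟨hmo, by simp only; omega⟩, hmc, Or.inr ⟨hn, Or.inl rfl⟩⟩
    · exact ⟨(m', n - 1), h, ⟨hmo, by simp only; omega⟩, hmc, Or.inr ⟨hn, Or.inr rfl⟩⟩
  · exact ⟨(m', n), hm', ⟨hmo, hn⟩, hmc, Or.inl rfl⟩

lemma square_of_above_edge {e x : ℤ × ℤ} (he : isE e) (h : cstar e x) (hne : x ≠ e) : isS x := by
  obtain ⟨s, s', hs, hs', h1, h2, h3⟩ := exists_sides he
  rcases above_edge he hs hs' h1 h2 h3 h with rfl | rfl | rfl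
  · exact absurd rfl hne
  · exact hs
  · exact hs'

lemma prop_tp {a1 a2 k1 k2 : Prop} (h1 : a1 ∨ a2) (h2 : k1 ∨ k2)
    (h3 : (a2 ↔ a1) ∨ (k2 ↔ k1)) : (a1 ∧ k1) ∨ (a2 ∧ k2) := by
  tauto

lemma Good.tp_edge {A K : Set (ℤ × ℤ)} (H : Good A K) {v e : ℤ × ℤ} (hv : isV v) (he : isE e)
    (hve : cstar v e) (hvK : v ∈ K) (heA : e ∈ A) (heK : e ∉ K) :
    ∃ e2 s, isE e2 ∧ e2 ∈ A ∧ e2 ∈ K ∧ cstar v e2 ∧ s ∈ A ∧ cstar e2 s ∧ cstar e s := by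
  obtain ⟨x, y⟩ := v
  obtain ⟨p, q⟩ := e
  have hx : x % 2 = 0 := hv.1
  have hy : y % 2 = 0 := hv.2
  have hcase := edge_vertex he hv hve
  simp only at hcase
  have fin1 : ∀ σ τ : ℤ, (σ = 1 ∨ σ = -1) → (τ = 1 ∨ τ = -1) → (x + σ, y + τ) ∈ A →
      (x - σ, y + τ) ∈ K → ∃ e2 s, isE e2 ∧ e2 ∈ A ∧ e2 ∈ K ∧ cstar (x, y) e2 ∧ s ∈ A ∧
        cstar e2 s ∧ cstar (x + σ, y) s := by
    intro σ τ hσ hτ h1 h2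
    have c1 : cstar (x, y + τ) (x + σ, y + τ) := cstar_mk (by omega) (by omega)
    have c2 : cstar (x, y + τ) (x - σ, y + τ) := cstar_mk (by omega) (by omega)
    exact ⟨(x, y + τ), (x + σ, y + τ), by simp only [isE]; omega, H.dcA _ _ c1 h1, H.dcK _ _ c2 h2,
      cstar_mk (by omega) (by omega), h1, c1, cstar_mk (by omega) (by omega)⟩
  have fin2 : ∀ σ τ : ℤ, (σ = 1 ∨ σ = -1) → (τ = 1 ∨ τ = -1) → (x + τ, y + σ) ∈ A →
      (x + τ, y - σ) ∈ K → ∃ e2 s, isE e2 ∧ e2 ∈ A ∧ e2 ∈ K ∧ cstar (x, y) e2 ∧ s ∈ A ∧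
        cstar e2 s ∧ cstar (x, y + σ) s := by
    intro σ τ hσ hτ h1 h2
    have c1 : cstar (x + τ, y) (x + τ, y + σ) := cstar_mk (by omega) (by omega)
    have c2 : cstar (x + τ, y) (x + τ, y - σ) := cstar_mk (by omega) (by omega)
    exact ⟨(x + τ, y), (x + τ, y + σ), by simp only [isE]; omega, H.dcA _ _ c1 h1, H.dcK _ _ c2 h2,
      cstar_mk (by omega) (by omega), h1, c1, cstar_mk (by omega) (by omega)⟩
  have t1 : ∀ m m' : ℤ, ((m, y - 1) ∈ A ↔ (m, y + 1) ∈ A) ∨ ((m', y - 1) ∈ K ↔ (m', y + 1) ∈ K) := by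
    intro m m'
    rcases H.tr2 y hy with h | h
    · exact Or.inl (h m)
    · exact Or.inr (h m')
  have t2 : ∀ m m' : ℤ, ((x - 1, m) ∈ A ↔ (x + 1, m) ∈ A) ∨ ((x - 1, m') ∈ K ↔ (x + 1, m') ∈ K) := by
    intro m m'
    rcases H.tr1 x hx with h | h
    · exact Or.inl (h m)
    · exact Or.inr (h m')
  rcases hcase with ⟨-, -, h2, h1 | h1⟩ | ⟨-, -, h1, h2 | h2⟩
  · obtain rfl : p = x + 1 := by omega
    obtain rfl : q = y := h2.symm
    have k0 : (x - 1, q) ∈ K := (H.rcK1 x q hvK hx).resolve_left heK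
    rcases prop_tp (H.rcA2 _ _ heA hy) (H.rcK2 _ _ k0 hy) (t1 _ _) with ⟨a, b⟩ | ⟨a, b⟩
    · exact fin1 1 1 (by omega) (by omega) a b
    · exact fin1 1 (-1) (by omega) (by omega) a b
  · obtain rfl : p = x - 1 := by omega
    obtain rfl : q = y := h2.symm
    have k0 : (x + 1, q) ∈ K := (H.rcK1 x q hvK hx).resolve_right heK
    rcases prop_tp (H.rcA2 _ _ heA hy) (H.rcK2 _ _ k0 hy) (t1 _ _) with ⟨a, b⟩ | ⟨a, b⟩
    · exact fin1 (-1) 1 (by omega) (by omega) a (by rwa [sub_neg_eq_add])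
    · exact fin1 (-1) (-1) (by omega) (by omega) a (by rwa [sub_neg_eq_add])
  · obtain rfl : q = y + 1 := by omega
    obtain rfl : p = x := h1.symm
    have k0 : (p, y - 1) ∈ K := (H.rcK2 p y hvK hy).resolve_left heK
    rcases prop_tp (H.rcA1 _ _ heA hx) (H.rcK1 _ _ k0 hx) (t2 _ _) with ⟨a, b⟩ | ⟨a, b⟩
    · exact fin2 1 1 (by omega) (by omega) a b
    · exact fin2 1 (-1) (by omega) (by omega) a b
  · obtain rfl : q = y - 1 := by omega
    obtain rfl : p = x := h1.symm
    have k0 : (p, y + 1) ∈ K := (H.rcK2 p y hvK hy).resolve_right heK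
    rcases prop_tp (H.rcA1 _ _ heA hx) (H.rcK1 _ _ k0 hx) (t2 _ _) with ⟨a, b⟩ | ⟨a, b⟩
    · exact fin2 (-1) 1 (by omega) (by omega) a (by rwa [sub_neg_eq_add])
    · exact fin2 (-1) (-1) (by omega) (by omega) a (by rwa [sub_neg_eq_add])

namespace Grid

variable (Γ : Grid)

lemma cell_mono {S S' : Set (ℤ × ℤ)} (h : S ⊆ S') : Γ.cell S ⊆ Γ.cell S' := fun _ hp => h hp

lemma ix_infinite {m : ℤ} (hm : m % 2 = 1) : {x | Γ.ix x = m}.Infinite := by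
  obtain ⟨k, rfl⟩ : ∃ k, m = 2 * k + 1 := ⟨m / 2, by omega⟩
  have : {x | Γ.ix x = 2 * k + 1} = Ioo (Γ.g k) (Γ.g (k + 1)) := by
    ext x
    exact Γ.ix_odd k x
  rw [this]
  exact Ioo_infinite (Γ.mono (by omega))

lemma cell_infinite {e : ℤ × ℤ} (he : isE e) : (Γ.cell {e}).Infinite := by
  obtain ⟨m, n⟩ := e
  simp only [isE] at he
  rcases Int.emod_two_eq_zero_or_one m with hm | hm
  · obtain ⟨x, hx⟩ := Γ.ix_surj m
    refine infinite_of_injOn_mapsTo (f := fun y : ℝ => (![x, y] : Plane)) ?_ ?_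
      (Γ.ix_infinite (m := n) (by omega))
    · intro y _ y' _ h
      exact congrFun h 1
    · intro y hy
      change Γ.ix y = n at hy
      change (Γ.ix x, Γ.ix y) = (m, n)
      rw [hx, hy]
  · obtain ⟨x, hx⟩ := Γ.ix_surj n
    refine infinite_of_injOn_mapsTo (f := fun y : ℝ => (![y, x] : Plane)) ?_ ?_
      (Γ.ix_infinite (m := m) (by omega))
    · intro y _ y' _ h
      exact congrFun h 0
    · intro y hy
      change Γ.ix y = m at hy
      change (Γ.ix y, Γ.ix x) = (m, n)
      rw [hx, hy]

lemma vertices_finite {A : Set (ℤ × ℤ)} (hA : A.Finite) :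
    {p | Γ.idx p ∈ A ∧ isV (Γ.idx p)}.Finite := by
  refine Finite.of_injOn (f := Γ.idx) (t := A) (fun p hp => hp.1) ?_ hA
  have key : ∀ x y, Γ.ix x % 2 = 0 → Γ.ix x = Γ.ix y → x = y := by
    intro x y h1 h2
    obtain ⟨k, hk⟩ : ∃ k, Γ.ix x = 2 * k := ⟨Γ.ix x / 2, by omega⟩
    rw [(Γ.ix_even k x).1 hk, (Γ.ix_even k y).1 (h2 ▸ hk)]
  intro p hp q hq h
  have h0 := key (p 0) (q 0) hp.2.1 (congrArg Prod.fst h)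
  have h1 := key (p 1) (q 1) hp.2.2 (congrArg Prod.snd h)
  ext i
  fin_cases i
  · exact h0
  · exact h1

theorem bridge {A K : Set (ℤ × ℤ)} (H : Good A K) (C : Set Plane)
    (hC : IsCompOf C (Γ.cell (A \ K)))
    (hTP : ∃! T : Set Plane, IsCompOf T (Γ.cell (A ∩ K)) ∧ SharesEdge T C)
    (hTN : ∃! T : Set Plane, IsCompOf T (Γ.cell {a | a ∉ A ∧ a ∉ K}) ∧ SharesEdge T C) :
    ∃ D, C = Γ.cell D ∧ Combi A K D := by
  obtain ⟨x0, hx0, hCeq⟩ := hC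
  have star : ∀ p q, p ∈ C → Γ.idx q ∈ A \ K →
      (cstar (Γ.idx p) (Γ.idx q) ∨ cstar (Γ.idx q) (Γ.idx p)) → q ∈ C := by
    intro p q hp hq h
    rw [hCeq] at hp ⊢
    exact Γ.comp_star hp hq h
  have hCsub : C ⊆ Γ.cell (A \ K) := by rw [hCeq]; exact connectedComponentIn_subset _ _
  have hCpre : IsPreconnected C := by rw [hCeq]; exact isPreconnected_connectedComponentIn
  let D : Set (ℤ × ℤ) := Γ.idx '' C
  have hmem : ∀ p, p ∈ C ↔ Γ.idx p ∈ D := by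
    intro p
    constructor
    · intro hp
      exact ⟨p, hp, rfl⟩
    · rintro ⟨q, hq, h⟩
      exact star q p hq (h ▸ hCsub hq) (Or.inl (h ▸ cstar_refl _))
  have hCD : C = Γ.cell D := by
    ext p
    exact hmem p
  have hDA : D ⊆ A \ K := by
    rintro a ⟨p, hp, rfl⟩
    exact hCsub hp
  have hadj : ∀ a b, a ∈ D → b ∈ A → b ∉ K → cstar a b ∨ cstar b a → b ∈ D := by
    rintro a b ⟨p, hp, rfl⟩ hbA hbK h
    obtain ⟨q, rfl⟩ := Γ.idx_surj b
    exact ⟨q, star p q hp ⟨hbA, hbK⟩ h, rfl⟩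
  have hdcM : DC (A ∩ K) := fun a b hab hb => ⟨H.dcA a b hab hb.1, H.dcK a b hab hb.2⟩
  have hclA : closure C ⊆ Γ.cell A := by
    apply closure_minimal _ (Γ.isClosed_cell H.dcA)
    exact hCsub.trans (Γ.cell_mono sdiff_subset)
  have hcellC : ∀ a ∈ D, Γ.cell {a} ⊆ C := by
    intro a ha p hp
    change Γ.idx p = a at hp
    rw [hmem, hp]
    exact ha
  have hcl : ∀ e s, s ∈ D → cstar e s → Γ.cell {e} ⊆ closure C := by
    intro e s hs hes p hp
    change Γ.idx p = e at hp
    exact closure_mono (hcellC s hs) (Γ.mem_closure_cell (hp ▸ hes))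
  have hup : ∀ a b, a ∈ D → b ∈ A → cstar a b → b ∈ D := fun a b ha hb hab =>
    hadj a b ha hb (fun h => (hDA ha).2 (H.dcK a b hab h)) (Or.inl hab)
  refine ⟨D, hCD, ?_⟩
  refine ⟨H.dcA, H.dcK, H.pos, H.fin, H.rcA1, H.rcA2, H.nd1, H.nd2, fun a ha => (hDA ha).1,
    fun a ha => (hDA ha).2, hadj, ?_, ?_, ?_, ?_, ?_⟩
  · rintro f hf a b ⟨p, hp, rfl⟩ ⟨q, hq, rfl⟩
    refine Γ.conn_const (S := D) ?_ hCpre hCD.le hf hp hq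
    intro a b c hab hbc ha hc
    have hbA : b ∈ A := H.dcA b c hbc (hDA hc).1
    exact hup a b ha hbA hab
  · obtain ⟨T, ⟨⟨x, -, hT⟩, hinf⟩, -⟩ := hTN
    obtain ⟨p, hp, hpV⟩ := hinf.exists_notMem_finite (Γ.vertices_finite H.fin)
    have hpA : Γ.idx p ∈ A := hclA hp.2
    have hnV : ¬ isV (Γ.idx p) := fun h => hpV ⟨hpA, h⟩
    have hp1 : p ∈ closure (Γ.cell {a | a ∉ A ∧ a ∉ K}) := by
      refine closure_mono ?_ hp.1
      rw [hT]
      exact connectedComponentIn_subset _ _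
    obtain ⟨n, hn, hpn⟩ := Γ.exists_of_mem_closure hp1
    have hp2 : p ∈ closure (Γ.cell D) := hCD ▸ hp.2
    obtain ⟨c, hc, hpc⟩ := Γ.exists_of_mem_closure hp2
    have hnne : n ≠ Γ.idx p := by
      rintro rfl
      exact hn.1 hpA
    have hE : isE (Γ.idx p) := by
      rcases trichotomy (Γ.idx p) with h | h | h
      · exact absurd h hnV
      · exact h
      · exact absurd (above_square h hpn) hnne
    have hnS := square_of_above_edge hE hpn hnne
    have hpK : Γ.idx p ∉ K := by
      intro hpK
      have hcne : c ≠ Γ.idx p := by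
        rintro rfl
        exact (hDA hc).2 hpK
      have hcS := square_of_above_edge hE hpc hcne
      obtain ⟨s, hs, hsS, hps⟩ := exists_square_in H.rcK1 H.rcK2 hpK
      rcases above_edge hE hcS hnS hpc hpn (by rintro rfl; exact hn.1 (hDA hc).1) hps with
        rfl | rfl | rfl
      · exact isE_not_isS hE hsS
      · exact (hDA hc).2 hs
      · exact hn.2 hs
    exact ⟨Γ.idx p, n, hadj c _ hc hpA hpK (Or.inr hpc), hE, hnS, hpn, hn.1⟩
  · have key : ∀ e d, e ∈ D → isE e → cstar e d → d ∉ A → ∀ p, Γ.idx p = d →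
        p ∈ Γ.cell {a | a ∉ A ∧ a ∉ K} ∧
        IsCompOf (connectedComponentIn (Γ.cell {a | a ∉ A ∧ a ∉ K}) p)
          (Γ.cell {a | a ∉ A ∧ a ∉ K}) ∧
        SharesEdge (connectedComponentIn (Γ.cell {a | a ∉ A ∧ a ∉ K}) p) C := by
      intro e d he hE hed hdA p hp
      have hpN : p ∈ Γ.cell {a | a ∉ A ∧ a ∉ K} := by
        change Γ.idx p ∉ A ∧ Γ.idx p ∉ K
        rw [hp]
        exact ⟨hdA, fun h => (hDA he).2 (H.dcK _ _ hed h)⟩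
      refine ⟨hpN, ⟨p, hpN, rfl⟩, (Γ.cell_infinite hE).mono ?_⟩
      refine subset_inter ?_ ((hcellC e he).trans subset_closure)
      intro q hq
      change Γ.idx q = e at hq
      have h1 : Γ.cell {d} ⊆ connectedComponentIn (Γ.cell {a | a ∉ A ∧ a ∉ K}) p := by
        intro r hr
        change Γ.idx r = d at hr
        refine Γ.comp_star (mem_connectedComponentIn hpN) ?_
          (Or.inl (by rw [hp, hr]; exact cstar_refl d))
        rw [hr, ← hp]
        exact hpN
      exact closure_mono h1 (Γ.mem_closure_cell (hq ▸ hed))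
    intro e e' d d' he he' hE hE' hd hd' hed hed' hdA hdA' f hf
    obtain ⟨p, hp⟩ := Γ.idx_surj d
    obtain ⟨p', hp'⟩ := Γ.idx_surj d'
    obtain ⟨k1, k2⟩ := key e d he hE hed hdA p hp
    obtain ⟨k1', k2'⟩ := key e' d' he' hE' hed' hdA' p' hp'
    have heq := hTN.unique k2 k2'
    have h1 := mem_connectedComponentIn k1'
    rw [← heq] at h1
    have := Γ.conn_const (S := {a | a ∉ A ∧ a ∉ K}) ?_ isPreconnected_connectedComponentIn
      (connectedComponentIn_subset _ _) hf (mem_connectedComponentIn k1) h1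
    · rwa [hp, hp'] at this
    · intro a b c hab _ ha _
      exact ⟨fun h => ha.1 (H.dcA a b hab h), fun h => ha.2 (H.dcK a b hab h)⟩
  · obtain ⟨T, ⟨⟨x, -, hT⟩, hinf⟩, -⟩ := hTP
    obtain ⟨p, hp⟩ := hinf.nonempty
    have hpM : p ∈ Γ.cell (A ∩ K) := by
      refine closure_minimal ?_ (Γ.isClosed_cell hdcM) hp.1
      rw [hT]
      exact connectedComponentIn_subset _ _
    have hp2 : p ∈ closure (Γ.cell D) := hCD ▸ hp.2
    obtain ⟨c, hc, hpc⟩ := Γ.exists_of_mem_closure hp2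
    exact ⟨c, Γ.idx p, hc, hpM.1, fun h => (hDA h).2 hpM.2, hpc⟩
  · have key : ∀ e v, e ∈ D → isE e → isV v → cstar v e → v ∈ A → v ∈ K → ∀ p, Γ.idx p = v →
        p ∈ Γ.cell (A ∩ K) ∧
        IsCompOf (connectedComponentIn (Γ.cell (A ∩ K)) p) (Γ.cell (A ∩ K)) ∧
        SharesEdge (connectedComponentIn (Γ.cell (A ∩ K)) p) C := by
      intro e v he hE hv hve hvA hvK p hp
      have hpN : p ∈ Γ.cell (A ∩ K) := by
        change Γ.idx p ∈ A ∩ K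
        rw [hp]
        exact ⟨hvA, hvK⟩
      obtain ⟨e2, s, hE2, heA2, heK2, hve2, hsA, hes2, hes⟩ :=
        H.tp_edge hv hE hve hvK (hDA he).1 (hDA he).2
      refine ⟨hpN, ⟨p, hpN, rfl⟩, (Γ.cell_infinite hE2).mono ?_⟩
      refine subset_inter ?_ (hcl e2 s (hup e s he hsA hes) hes2)
      refine Subset.trans ?_ subset_closure
      intro r hr
      change Γ.idx r = e2 at hr
      refine Γ.comp_star (mem_connectedComponentIn hpN) ?_ (Or.inl (by rw [hp, hr]; exact hve2))
      rw [hr]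
      exact ⟨heA2, heK2⟩
    intro e e' v v' he he' hE hE' hv hv' hve hve' hvA hvK hvA' hvK' f hf
    obtain ⟨p, hp⟩ := Γ.idx_surj v
    obtain ⟨p', hp'⟩ := Γ.idx_surj v'
    obtain ⟨k1, k2⟩ := key e v he hE hv hve hvA hvK p hp
    obtain ⟨k1', k2'⟩ := key e' v' he' hE' hv' hve' hvA' hvK' p' hp'
    have heq := hTP.unique k2 k2'
    have h1 := mem_connectedComponentIn k1'
    rw [← heq] at h1
    have := Γ.conn_const (S := A ∩ K) ?_ isPreconnected_connectedComponentIn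
      (connectedComponentIn_subset _ _) hf (mem_connectedComponentIn k1) h1
    · rwa [hp, hp'] at this
    · intro a b c _ hbc _ hc
      exact hdcM b c hbc hc

end Grid

/-! ### Part 6: the concrete grid -/

/-- grid lines -/
def gf (ε : ℝ) (k : ℤ) : ℝ :=
  ((k / 4 : ℤ) : ℝ) + (if k % 4 = 0 then -(2 * ε) else if k % 4 = 1 then -ε else
    if k % 4 = 2 then ε else 2 * ε)

lemma gf0 (ε : ℝ) (i : ℤ) : gf ε (4 * i) = i - 2 * ε := by
  unfold gf
  rw [show 4 * i / 4 = i by omega, if_pos (by omega)]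
  ring

lemma gf1 (ε : ℝ) (i : ℤ) : gf ε (4 * i + 1) = i - ε := by
  unfold gf
  rw [show (4 * i + 1) / 4 = i by omega, if_neg (by omega), if_pos (by omega)]
  ring

lemma gf2 (ε : ℝ) (i : ℤ) : gf ε (4 * i + 2) = i + ε := by
  unfold gf
  rw [show (4 * i + 2) / 4 = i by omega, if_neg (by omega), if_neg (by omega), if_pos (by omega)]

lemma gf3 (ε : ℝ) (i : ℤ) : gf ε (4 * i + 3) = i + 2 * ε := by
  unfold gf
  rw [show (4 * i + 3) / 4 = i by omega, if_neg (by omega), if_neg (by omega), if_neg (by omega)]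

lemma gf4 (ε : ℝ) (i : ℤ) : gf ε (4 * i + 4) = i + 1 - 2 * ε := by
  rw [show 4 * i + 4 = 4 * (i + 1) by ring, gf0]
  push_cast
  ring

lemma gf_mono {ε : ℝ} (h0 : 0 < ε) (h1 : ε < 1 / 4) : StrictMono (gf ε) := by
  apply strictMono_int_of_lt_succ
  intro k
  obtain ⟨i, hi⟩ : ∃ i, i = k / 4 := ⟨_, rfl⟩
  have hk : k = 4 * i ∨ k = 4 * i + 1 ∨ k = 4 * i + 2 ∨ k = 4 * i + 3 := by omega
  rcases hk with h | h | h | h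
  · rw [h, gf0, gf1]; linarith
  · rw [h, show 4 * i + 1 + 1 = 4 * i + 2 by ring, gf1, gf2]; linarith
  · rw [h, show 4 * i + 2 + 1 = 4 * i + 3 by ring, gf2, gf3]; linarith
  · rw [h, show 4 * i + 3 + 1 = 4 * i + 4 by ring, gf3, gf4]; linarith

lemma gf_exists (ε : ℝ) (x : ℝ) : ∃ k, gf ε k ≤ x ∧ x < gf ε (k + 1) := by
  obtain ⟨i, hi⟩ : ∃ i, i = ⌊x + 2 * ε⌋ := ⟨_, rfl⟩
  have h1 : (i : ℝ) ≤ x + 2 * ε := by rw [hi]; exact Int.floor_le _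
  have h2 : x + 2 * ε < i + 1 := by rw [hi]; exact Int.lt_floor_add_one _
  by_cases c1 : x < gf ε (4 * i + 1)
  · exact ⟨4 * i, by rw [gf0]; linarith, c1⟩
  by_cases c2 : x < gf ε (4 * i + 2)
  · exact ⟨4 * i + 1, not_lt.1 c1, by rwa [show 4 * i + 1 + 1 = 4 * i + 2 by ring]⟩
  by_cases c3 : x < gf ε (4 * i + 3)
  · exact ⟨4 * i + 2, not_lt.1 c2, by rwa [show 4 * i + 2 + 1 = 4 * i + 3 by ring]⟩
  · exact ⟨4 * i + 3, not_lt.1 c3,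
      by rw [show 4 * i + 3 + 1 = 4 * i + 4 by ring, gf4]; linarith⟩

lemma exists_grid {ε : ℝ} (h0 : 0 < ε) (h1 : ε < 1 / 4) : ∃ Γ : Grid, Γ.g = gf ε := by
  classical
  choose κ hκ1 hκ2 using gf_exists ε
  have hm := gf_mono h0 h1
  refine ⟨⟨gf ε, fun x => if x = gf ε (κ x) then 2 * κ x else 2 * κ x + 1, hm, ?_, ?_⟩, rfl⟩
  · intro k x
    have e1 : k ≤ κ x ↔ gf ε k ≤ x := by
      constructor
      · intro h
        exact (hm.monotone h).trans (hκ1 x)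
      · intro h
        have := hm.lt_iff_lt.1 (h.trans_lt (hκ2 x))
        omega
    rw [← e1]
    split_ifs <;> omega
  · intro k x
    split_ifs with h
    · have e1 : κ x ≤ k ↔ x ≤ gf ε k := by
        rw [← hm.le_iff_le, ← h]
      rw [← e1]
      omega
    · have hlt : gf ε (κ x) < x := lt_of_le_of_ne (hκ1 x) (Ne.symm h)
      have e1 : κ x + 1 ≤ k ↔ x ≤ gf ε k := by
        constructor
        · intro h'
          exact (hκ2 x).le.trans (hm.monotone h')
        · intro h'
          have := hm.lt_iff_lt.1 (hlt.trans_le h')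
          omega
      rw [← e1]
      omega

/-- index set of a thickened foreground -/
def Ind (S : Set (ℕ × ℕ)) (a b : ℤ) : Set (ℤ × ℤ) :=
  {x | ∃ p ∈ S, (8 * (p.1 : ℤ) - a ≤ x.1 ∧ x.1 ≤ 8 * (p.1 : ℤ) + b) ∧
    (8 * (p.2 : ℤ) - a ≤ x.2 ∧ x.2 ≤ 8 * (p.2 : ℤ) + b)}

lemma mem_thick {δ : ℝ} (hδ : 0 ≤ δ) (S : Set (ℕ × ℕ)) (y : Plane) :
    y ∈ thick δ (fg S) ↔ ∃ p ∈ S, ((p.1 : ℝ) - 1 - δ ≤ y 0 ∧ y 0 ≤ (p.1 : ℝ) + δ) ∧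
      ((p.2 : ℝ) - 1 - δ ≤ y 1 ∧ y 1 ≤ (p.2 : ℝ) + δ) := by
  constructor
  · rintro ⟨x, hx, hxy⟩
    simp only [fg, mem_iUnion] at hx
    obtain ⟨p, hp, ⟨h1, h2⟩, ⟨h3, h4⟩⟩ := hx
    rw [pi_norm_le_iff_of_nonneg hδ] at hxy
    have k0 := abs_le.1 (hxy 0)
    have k1 := abs_le.1 (hxy 1)
    simp only [Pi.sub_apply] at k0 k1
    refine ⟨p, hp, ⟨?_, ?_⟩, ⟨?_, ?_⟩⟩ <;> linarith [k0.1, k0.2, k1.1, k1.2]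
  · rintro ⟨p, hp, ⟨h1, h2⟩, ⟨h3, h4⟩⟩
    have key : ∀ a t : ℝ, a - 1 - δ ≤ t → t ≤ a + δ →
        ∃ s, s ∈ Icc (a - 1) a ∧ |s - t| ≤ δ := by
      intro a t ha hb
      by_cases c1 : t < a - 1
      · exact ⟨a - 1, ⟨le_rfl, by linarith⟩, abs_le.2 ⟨by linarith, by linarith⟩⟩
      · by_cases c2 : a < t
        · exact ⟨a, ⟨by linarith, le_rfl⟩, abs_le.2 ⟨by linarith, by linarith⟩⟩
        · exact ⟨t, ⟨not_lt.1 c1, not_lt.1 c2⟩, by rw [sub_self, abs_zero]; exact hδ⟩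
    obtain ⟨s0, i0, j0⟩ := key _ _ h1 h2
    obtain ⟨s1, i1, j1⟩ := key _ _ h3 h4
    refine ⟨![s0, s1], ?_, ?_⟩
    · simp only [fg, mem_iUnion]
      exact ⟨p, hp, i0, i1⟩
    · rw [pi_norm_le_iff_of_nonneg hδ]
      intro i
      fin_cases i
      · exact j0
      · exact j1

lemma thick_eps {ε : ℝ} (h0 : 0 < ε) (Γ : Grid) (hΓ : Γ.g = gf ε) (S : Set (ℕ × ℕ)) :
    thick ε (fg S) = Γ.cell (Ind S 6 4) := by
  ext y
  rw [mem_thick h0.le]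
  have key : ∀ (n : ℕ) (t : ℝ), ((n : ℝ) - 1 - ε ≤ t ∧ t ≤ (n : ℝ) + ε) ↔
      (8 * (n : ℤ) - 6 ≤ Γ.ix t ∧ Γ.ix t ≤ 8 * (n : ℤ) + 4) := by
    intro n t
    rw [show 8 * (n : ℤ) - 6 = 2 * (4 * ((n : ℤ) - 1) + 1) by ring,
      show 8 * (n : ℤ) + 4 = 2 * (4 * (n : ℤ) + 2) by ring, Γ.le_ix, Γ.ix_le, hΓ, gf1, gf2]
    push_cast
    rfl
  simp only [key]
  rfl

lemma thick_two_eps {ε : ℝ} (h0 : 0 < ε) (Γ : Grid) (hΓ : Γ.g = gf ε) (S : Set (ℕ × ℕ)) :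
    thick (2 * ε) (fg S) = Γ.cell (Ind S 8 6) := by
  ext y
  rw [mem_thick (by linarith)]
  have key : ∀ (n : ℕ) (t : ℝ), ((n : ℝ) - 1 - 2 * ε ≤ t ∧ t ≤ (n : ℝ) + 2 * ε) ↔
      (8 * (n : ℤ) - 8 ≤ Γ.ix t ∧ Γ.ix t ≤ 8 * (n : ℤ) + 6) := by
    intro n t
    rw [show 8 * (n : ℤ) - 8 = 2 * (4 * ((n : ℤ) - 1)) by ring,
      show 8 * (n : ℤ) + 6 = 2 * (4 * (n : ℤ) + 3) by ring, Γ.le_ix, Γ.ix_le, hΓ, gf0, gf3]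
    push_cast
    rfl
  simp only [key]
  rfl

lemma Ind_dc (S : Set (ℕ × ℕ)) {a b : ℤ} (ha : a % 2 = 0) (hb : b % 2 = 0) : DC (Ind S a b) := by
  rintro ⟨m, n⟩ ⟨m', n'⟩ ⟨h1, h2⟩ ⟨p, hp, h3, h4⟩
  simp only [cstar1] at h1 h2 h3 h4
  exact ⟨p, hp, by simp only; omega, by simp only; omega⟩

lemma Ind_rc1 (S : Set (ℕ × ℕ)) {a b : ℤ} (hab : 2 ≤ a + b) (m n : ℤ) (h : (m, n) ∈ Ind S a b) :
    (m + 1, n) ∈ Ind S a b ∨ (m - 1, n) ∈ Ind S a b := by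
  obtain ⟨p, hp, h3, h4⟩ := h
  simp only at h3 h4
  by_cases hc : m + 1 ≤ 8 * (p.1 : ℤ) + b
  · exact Or.inl ⟨p, hp, ⟨by simp only; omega, hc⟩, h4⟩
  · exact Or.inr ⟨p, hp, by simp only; omega, h4⟩

lemma Ind_rc2 (S : Set (ℕ × ℕ)) {a b : ℤ} (hab : 2 ≤ a + b) (m n : ℤ) (h : (m, n) ∈ Ind S a b) :
    (m, n + 1) ∈ Ind S a b ∨ (m, n - 1) ∈ Ind S a b := by
  obtain ⟨p, hp, h3, h4⟩ := h
  simp only at h3 h4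
  by_cases hc : n + 1 ≤ 8 * (p.2 : ℤ) + b
  · exact Or.inl ⟨p, hp, h3, ⟨by simp only; omega, hc⟩⟩
  · exact Or.inr ⟨p, hp, h3, by simp only; omega⟩

lemma Ind_tr1 (S : Set (ℕ × ℕ)) {a b m : ℤ} (h1 : (m + a) % 8 ≠ 0) (h2 : (m - b) % 8 ≠ 0)
    (hm : m % 2 = 0) (ha : a % 2 = 0) (hb : b % 2 = 0) (n : ℤ) :
    (m - 1, n) ∈ Ind S a b ↔ (m + 1, n) ∈ Ind S a b := by
  constructor
  · rintro ⟨p, hp, h3, h4⟩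
    exact ⟨p, hp, by simp only at *; omega, h4⟩
  · rintro ⟨p, hp, h3, h4⟩
    exact ⟨p, hp, by simp only at *; omega, h4⟩

lemma Ind_tr2 (S : Set (ℕ × ℕ)) {a b n : ℤ} (h1 : (n + a) % 8 ≠ 0) (h2 : (n - b) % 8 ≠ 0)
    (hn : n % 2 = 0) (ha : a % 2 = 0) (hb : b % 2 = 0) (m : ℤ) :
    (m, n - 1) ∈ Ind S a b ↔ (m, n + 1) ∈ Ind S a b := by
  constructor
  · rintro ⟨p, hp, h3, h4⟩
    exact ⟨p, hp, h3, by simp only at *; omega⟩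
  · rintro ⟨p, hp, h3, h4⟩
    exact ⟨p, hp, h3, by simp only at *; omega⟩

lemma Ind_good {h w : ℕ} {P G : Set (ℕ × ℕ)} (hP : OnGrid P h w) : Good (Ind P 6 4) (Ind G 8 6) := by
  refine ⟨Ind_dc P (by norm_num) (by norm_num), Ind_dc G (by norm_num) (by norm_num), ?_, ?_,
    fun m n h _ => Ind_rc1 P (by norm_num) m n h, fun m n h _ => Ind_rc2 P (by norm_num) m n h,
    fun m n h _ => Ind_rc1 G (by norm_num) m n h, fun m n h _ => Ind_rc2 G (by norm_num) m n h,
    ?_, ?_, ?_, ?_⟩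
  · rintro ⟨m, n⟩ ⟨p, hp, h3, h4⟩
    have := (hP hp).1.1
    simp only at *
    omega
  · refine (finite_Icc ((-100 : ℤ), (-100 : ℤ)) ((8 * h + 100 : ℤ), (8 * w + 100 : ℤ))).subset ?_
    rintro ⟨m, n⟩ ⟨p, hp, h3, h4⟩
    have h5 := (hP hp).1.2
    have h6 := (hP hp).2.2
    simp only at *
    exact ⟨⟨by simp only; omega, by simp only; omega⟩, ⟨by simp only; omega, by simp only; omega⟩⟩
  · rintro m n hm hn ⟨p, hp, h1, h2⟩ ⟨q, hq, h3, h4⟩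
    simp only at h1 h2 h3 h4
    have : (8 * (p.1 : ℤ) - 6 ≤ m - 1) ∨ (m + 1 ≤ 8 * (q.1 : ℤ) + 4) := by omega
    rcases this with h' | h'
    · exact Or.inr ⟨p, hp, ⟨h', by simp only; omega⟩, h2⟩
    · exact Or.inl ⟨q, hq, ⟨by simp only; omega, h'⟩, h4⟩
  · rintro m n hm hn ⟨p, hp, h1, h2⟩ ⟨q, hq, h3, h4⟩
    simp only at h1 h2 h3 h4
    have : (8 * (p.1 : ℤ) - 6 ≤ m - 1) ∨ (m + 1 ≤ 8 * (q.1 : ℤ) + 4) := by omega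
    rcases this with h' | h'
    · exact Or.inr ⟨p, hp, ⟨h', by simp only; omega⟩, h2⟩
    · exact Or.inl ⟨q, hq, ⟨by simp only; omega, h'⟩, h4⟩
  · intro m hm
    by_cases hc : (m + 6) % 8 ≠ 0 ∧ (m - 4) % 8 ≠ 0
    · exact Or.inl (Ind_tr1 P hc.1 hc.2 hm (by norm_num) (by norm_num))
    · exact Or.inr (Ind_tr1 G (by omega) (by omega) hm (by norm_num) (by norm_num))
  · intro m hm
    by_cases hc : (m + 6) % 8 ≠ 0 ∧ (m - 4) % 8 ≠ 0
    · exact Or.inl (Ind_tr2 P hc.1 hc.2 hm (by norm_num) (by norm_num))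
    · exact Or.inr (Ind_tr2 G (by omega) (by omega) hm (by norm_num) (by norm_num))

/-- If `C` is a regular connected component of `FP`, then `F_ε(P)` strongly
deformation retracts onto `F_ε(P) \ C`. -/
theorem removing_regular_fp_component_deformation_retract
    (h w : ℕ) (P G : Set (ℕ × ℕ)) (hP : OnGrid P h w) (hG : OnGrid G h w)
    (ε : ℝ) (hε0 : 0 < ε) (hε : ε < 1 / 4)
    (C : Set Plane) (hC : IsCompOf C (FPset P G ε)) (hreg : RegularComp P G ε C) :
    SDR (thick ε (fg P)) (thick ε (fg P) \ C) := by
  obtain ⟨Γ, hΓ⟩ := exists_grid hε0 hε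
  have eA := thick_eps hε0 Γ hΓ P
  have eK := thick_two_eps hε0 Γ hΓ G
  have eFP : FPset P G ε = Γ.cell (Ind P 6 4 \ Ind G 8 6) := by
    rw [FPset, eA, eK]; rfl
  have eTP : TPset P G ε = Γ.cell (Ind P 6 4 ∩ Ind G 8 6) := by
    rw [TPset, eA, eK]; rfl
  have eTN : TNset P G ε = Γ.cell {a | a ∉ Ind P 6 4 ∧ a ∉ Ind G 8 6} := by
    rw [TNset, eA, eK]; rfl
  rw [eFP] at hC
  obtain ⟨hTP, hTN⟩ := hreg
  rw [eTP] at hTP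
  rw [eTN] at hTN
  obtain ⟨D, hCD, hD⟩ := Γ.bridge (Ind_good hP) C hC hTP hTN
  rw [eA, hCD]
  exact Γ.SDR_steps hD.main



end
end

section
/- Under the zero-loss hypothesis, the inclusion map TN = B_ε(P) ∩ B_{2ε}(G) ↪ B_ε(P) ∪ B_{2ε}(G) of the intersection of the backgrounds into their union induces a bijection from the set of connected components of TN onto the set of connected components of B_ε(P) ∪ B_{2ε}(G). (This is the degree-0, background part of the statement that the DIU metric ξ^{err} vanishes: dim ker j₀ = dim coker j₀ = 0.) -/
open Set Metric

noncomputable section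

/-- The intersection of the (thinned-out) backgrounds is contained in their union. -/
theorem TNset_subset_union (P G : Set (ℕ × ℕ)) (ε : ℝ) :
    TNset P G ε ⊆ (thick ε (fg P))ᶜ ∪ (thick (2 * ε) (fg G))ᶜ :=
  fun _ hx => Or.inl hx.1

/-- Local structure of a finite union of closed convex bodies near one of its points. -/
theorem local_structure {ι : Type} (I : Set ι) (hI : I.Finite) (D : ι → Set Plane)
    (hcl : ∀ i, IsClosed (D i)) (hcv : ∀ i, Convex ℝ (D i)) (hint : ∀ i, (interior (D i)).Nonempty)
    (K L : Set Plane) (hK : K = ⋃ i ∈ I, D i) (hL : IsClosed L) (x : Plane) (hx : x ∈ K)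
    (hxL : x ∉ L) :
    ∃ r > 0, ball x r ⊆ Lᶜ ∧ ∀ z ∈ ball x r,
      (z ∈ K → z ∈ connectedComponentIn (K ∩ Lᶜ) x) ∧
      (z ∉ K → SharesEdge (connectedComponentIn (Kᶜ ∩ Lᶜ) z) (connectedComponentIn (K ∩ Lᶜ) x)) := by
  have hKcl : IsClosed K := by
    rw [hK]; exact hI.isClosed_biUnion fun i _ => hcl i
  have hK' : IsClosed (⋃ i ∈ {i ∈ I | x ∉ D i}, D i) :=
    (hI.subset (fun i hi => hi.1)).isClosed_biUnion fun i _ => hcl i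
  have hxK' : x ∉ ⋃ i ∈ {i ∈ I | x ∉ D i}, D i := by
    simp only [mem_iUnion, not_exists]
    intro i hi h; exact hi.2 h
  obtain ⟨r, hr, hb⟩ := Metric.isOpen_iff.1 (hK'.isOpen_compl.inter hL.isOpen_compl) x ⟨hxK', hxL⟩
  have hNL : ball x r ⊆ Lᶜ := fun z hz => (hb hz).2
  have hstar : ∀ z ∈ ball x r, z ∈ K → z ∈ connectedComponentIn (K ∩ Lᶜ) x := by
    intro z hz hzK
    have hzK2 := hzK
    rw [hK] at hzK2
    simp only [mem_iUnion] at hzK2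
    obtain ⟨i, hi, hzi⟩ := hzK2
    have hxi : x ∈ D i := by
      by_contra hxi
      apply (hb hz).1
      simp only [mem_iUnion]
      exact ⟨i, ⟨hi, hxi⟩, hzi⟩
    have hpre : IsPreconnected (D i ∩ ball x r) :=
      ((hcv i).inter (convex_ball x r)).isPreconnected
    refine hpre.subset_connectedComponentIn ⟨hxi, mem_ball_self hr⟩ ?_ ⟨hzi, hz⟩
    rintro w ⟨hw, hw2⟩
    refine ⟨?_, hNL hw2⟩
    rw [hK]; simp only [mem_iUnion]; exact ⟨i, hi, hw⟩
  refine ⟨r, hr, hNL, fun y hy => ⟨hstar y hy, fun hyK => ?_⟩⟩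
  -- interior point
  obtain ⟨k, s, hs, hks, hys⟩ : ∃ k : Plane, ∃ s > 0, ball k s ⊆ K ∩ ball x r ∧
      ball y s ⊆ Kᶜ ∩ ball x r := by
    have hx2 := hx
    rw [hK] at hx2
    simp only [mem_iUnion] at hx2
    obtain ⟨i, hi, hxi⟩ := hx2
    have hxc : x ∈ closure (interior (D i)) := by
      rw [(hcv i).closure_interior_eq_closure_of_nonempty_interior (hint i)]
      exact subset_closure hxi
    obtain ⟨k, hk1, hk2⟩ := mem_closure_iff.1 hxc (ball x r) isOpen_ball (mem_ball_self hr)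
    obtain ⟨s1, hs1, h1⟩ := Metric.isOpen_iff.1 (isOpen_interior.inter isOpen_ball) k ⟨hk2, hk1⟩
    obtain ⟨s2, hs2, h2⟩ := Metric.isOpen_iff.1 (hKcl.isOpen_compl.inter isOpen_ball) y ⟨hyK, hy⟩
    refine ⟨k, min s1 s2, lt_min hs1 hs2, ?_, (ball_subset_ball (min_le_right _ _)).trans h2⟩
    refine (ball_subset_ball (min_le_left _ _)).trans (h1.trans ?_)
    rintro w ⟨hw, hw2⟩
    refine ⟨?_, hw2⟩
    rw [hK]; simp only [mem_iUnion]; exact ⟨i, hi, interior_subset hw⟩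
  set W := Kᶜ ∩ Lᶜ with hW
  have hNW : Kᶜ ∩ ball x r ⊆ W := fun w hw => ⟨hw.1, hNL hw.2⟩
  set d : Plane := k - y with hd
  have hd0 : d ≠ 0 := by
    intro h0
    have : k = y := sub_eq_zero.1 h0
    exact hyK (this ▸ (hks (mem_ball_self hs)).1)
  set u : Plane := ![d 1, - d 0] with hu
  have hpos : 0 < d 0 ^ 2 + d 1 ^ 2 := by
    by_contra hn
    apply hd0
    have h0 : d 0 = 0 := by nlinarith [sq_nonneg (d 0), sq_nonneg (d 1)]
    have h1 : d 1 = 0 := by nlinarith [sq_nonneg (d 0), sq_nonneg (d 1)]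
    ext i; fin_cases i
    · exact h0
    · exact h1
  let l : Plane → ℝ := fun v => v 0 * d 1 - v 1 * d 0
  set s' := s / (‖u‖ + 1) with hs'
  have hs'pos : 0 < s' := by positivity
  have key : ∀ τ ∈ Ioo 0 s', ∃ p ∈ closure (connectedComponentIn W y) ∩
      closure (connectedComponentIn (K ∩ Lᶜ) x), l p = l y + τ * (d 0 ^ 2 + d 1 ^ 2) := by
    intro τ hτ
    have hnorm : ‖τ • u‖ < s := by
      rw [norm_smul, Real.norm_of_nonneg hτ.1.le]
      have h1 : τ * (‖u‖ + 1) < s := (lt_div_iff₀ (by positivity)).1 hτ.2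
      nlinarith [norm_nonneg u, hτ.1]
    set z := y + τ • u with hz
    have hzb : z ∈ ball y s := by simpa [hz, mem_ball, dist_eq_norm] using hnorm
    have hzd : z + d ∈ ball k s := by
      have : z + d - k = τ • u := by rw [hz, hd]; abel
      rw [mem_ball, dist_eq_norm, this]; exact hnorm
    let γ : ℝ → Plane := fun t => z + t • d
    have hγ : Continuous γ := by fun_prop
    have hγN : ∀ t ∈ Icc (0:ℝ) 1, γ t ∈ ball x r := fun t ht =>
      (convex_ball x r).add_smul_mem (hys hzb).2 (hks hzd).2 ht
    have hcomp : IsCompact (Icc (0:ℝ) 1 ∩ γ ⁻¹' K) :=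
      isCompact_Icc.inter_right (hKcl.preimage hγ)
    have hne : (Icc (0:ℝ) 1 ∩ γ ⁻¹' K).Nonempty :=
      ⟨1, ⟨by norm_num, le_rfl⟩, by simpa [γ] using (hks hzd).1⟩
    obtain ⟨t0, ⟨ht0, ht0K⟩, hmin⟩ := hcomp.exists_isLeast hne
    have ht0pos : 0 < t0 := by
      rcases ht0.1.lt_or_eq with h | h
      · exact h
      · exfalso
        apply (hys hzb).1
        have : γ t0 ∈ K := ht0K
        simpa [γ, ← h] using this
    have himg : γ '' Ico 0 t0 ⊆ W := by
      rintro _ ⟨t, ht, rfl⟩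
      have ht1 : t ∈ Icc (0:ℝ) 1 := ⟨ht.1, ht.2.le.trans ht0.2⟩
      exact hNW ⟨fun hc => absurd (hmin ⟨ht1, hc⟩) (not_le.2 ht.2), hγN t ht1⟩
    have hzc : z ∈ connectedComponentIn W y :=
      (convex_ball y s).isPreconnected.subset_connectedComponentIn (mem_ball_self hs)
        (hys.trans hNW) hzb
    have hsub : γ '' Ico 0 t0 ⊆ connectedComponentIn W y := by
      rw [connectedComponentIn_eq hzc]
      refine (isPreconnected_Ico.image γ hγ.continuousOn).subset_connectedComponentIn ?_ himg
      exact ⟨0, ⟨le_rfl, ht0pos⟩, by simp [γ]⟩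
    refine ⟨γ t0, ⟨closure_mono hsub ?_, subset_closure (hstar _ (hγN t0 ht0) ht0K)⟩, ?_⟩
    · apply image_closure_subset_closure_image hγ
      refine ⟨t0, ?_, rfl⟩
      rw [closure_Ico ht0pos.ne]
      exact ⟨ht0.1, le_rfl⟩
    · simp only [l, γ, hz, hu, Pi.add_apply, Pi.smul_apply, smul_eq_mul, Matrix.cons_val_zero,
        Matrix.cons_val_one]
      ring
  intro hfin
  have hfin2 := hfin.image l
  refine ((Ioo_infinite hs'pos).image (f := fun τ => l y + τ * (d 0 ^ 2 + d 1 ^ 2)) ?_) (hfin2.subset ?_)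
  · intro a _ b _ hab
    have : a * (d 0 ^ 2 + d 1 ^ 2) = b * (d 0 ^ 2 + d 1 ^ 2) := add_left_cancel hab
    exact mul_right_cancel₀ hpos.ne' this
  · rintro _ ⟨τ, hτ, rfl⟩
    obtain ⟨p, hp, hlp⟩ := key τ hτ
    exact ⟨p, hp, hlp⟩

/-- The thickened pixel. -/
def box (δ : ℝ) (p : ℕ × ℕ) : Set Plane :=
  Set.pi univ fun i => Icc ((![(p.1 : ℝ), (p.2 : ℝ)] : Plane) i - 1 - δ)
    ((![(p.1 : ℝ), (p.2 : ℝ)] : Plane) i + δ)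

theorem mem_box (δ : ℝ) (p : ℕ × ℕ) (y : Plane) : y ∈ box δ p ↔
    ((p.1 : ℝ) - 1 - δ ≤ y 0 ∧ y 0 ≤ p.1 + δ) ∧ ((p.2 : ℝ) - 1 - δ ≤ y 1 ∧ y 1 ≤ p.2 + δ) := by
  simp only [box, mem_pi, mem_univ, true_imp_iff, mem_Icc, Fin.forall_fin_two,
    Matrix.cons_val_zero, Matrix.cons_val_one]

theorem interior_box (δ : ℝ) (p : ℕ × ℕ) (y : Plane) : y ∈ interior (box δ p) ↔
    ((p.1 : ℝ) - 1 - δ < y 0 ∧ y 0 < p.1 + δ) ∧ ((p.2 : ℝ) - 1 - δ < y 1 ∧ y 1 < p.2 + δ) := by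
  rw [box, interior_pi_set finite_univ]
  simp [Fin.forall_fin_two]

theorem isClosed_box (δ : ℝ) (p : ℕ × ℕ) : IsClosed (box δ p) :=
  isClosed_set_pi fun _ _ => isClosed_Icc

theorem convex_box (δ : ℝ) (p : ℕ × ℕ) : Convex ℝ (box δ p) :=
  convex_pi fun _ _ => convex_Icc _ _

theorem interior_box_nonempty (δ : ℝ) (hδ : 0 < δ) (p : ℕ × ℕ) :
    (interior (box δ p)).Nonempty := by
  refine ⟨![(p.1 : ℝ), (p.2 : ℝ)], ?_⟩
  rw [interior_box]
  simp only [Matrix.cons_val_zero, Matrix.cons_val_one]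
  refine ⟨⟨?_, ?_⟩, ?_, ?_⟩ <;> linarith

theorem clamp_aux (a δ y : ℝ) (hδ : 0 < δ) (h1 : a - 1 - δ ≤ y) (h2 : y ≤ a + δ) :
    ∃ x, a - 1 ≤ x ∧ x ≤ a ∧ |x - y| ≤ δ := by
  rcases lt_or_ge y (a - 1) with h | h
  · exact ⟨a - 1, le_rfl, by linarith, abs_le.2 ⟨by linarith, by linarith⟩⟩
  rcases lt_or_ge a y with h' | h'
  · exact ⟨a, by linarith, le_rfl, abs_le.2 ⟨by linarith, by linarith⟩⟩
  · exact ⟨y, h, h', by simpa using hδ.le⟩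

theorem thick_eq (δ : ℝ) (hδ : 0 < δ) (S : Set (ℕ × ℕ)) :
    thick δ (fg S) = ⋃ p ∈ S, box δ p := by
  ext y
  simp only [thick, fg, mem_iUnion, mem_ofPred_eq, mem_box, pixel, mem_Icc, exists_prop]
  constructor
  · rintro ⟨x, ⟨p, hp, ⟨h1, h2⟩, h3, h4⟩, hn⟩
    rw [pi_norm_le_iff_of_nonneg hδ.le] at hn
    have a0 := abs_le.1 (by simpa using hn 0)
    have a1 := abs_le.1 (by simpa using hn 1)
    refine ⟨p, hp, ⟨?_, ?_⟩, ?_, ?_⟩ <;> linarith [a0.1, a0.2, a1.1, a1.2]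
  · rintro ⟨p, hp, ⟨h1, h2⟩, h3, h4⟩
    obtain ⟨x0, b1, b2, b3⟩ := clamp_aux _ δ _ hδ h1 h2
    obtain ⟨x1, c1, c2, c3⟩ := clamp_aux _ δ _ hδ h3 h4
    refine ⟨![x0, x1], ⟨p, hp, ⟨b1, b2⟩, c1, c2⟩, ?_⟩
    rw [pi_norm_le_iff_of_nonneg hδ.le]
    intro i; fin_cases i
    · simpa using b3
    · simpa using c3

theorem frontier_box (δ : ℝ) (p : ℕ × ℕ) (y : Plane) (hy : y ∈ frontier (box δ p)) :
    (y 0 = p.1 - 1 - δ ∨ y 0 = p.1 + δ) ∨ (y 1 = p.2 - 1 - δ ∨ y 1 = p.2 + δ) := by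
  rw [(isClosed_box δ p).frontier_eq] at hy
  obtain ⟨h1, h2⟩ := hy
  rw [mem_box] at h1
  rw [interior_box] at h2
  by_contra hc
  push Not at hc
  obtain ⟨⟨c1, c2⟩, c3, c4⟩ := hc
  exact h2 ⟨⟨lt_of_le_of_ne h1.1.1 c1.symm, lt_of_le_of_ne h1.1.2 c2⟩,
    lt_of_le_of_ne h1.2.1 c3.symm, lt_of_le_of_ne h1.2.2 c4⟩

theorem coord_aux (ε : ℝ) (h0 : 0 < ε) (h1 : ε < 1 / 4) (a b : ℕ) (y : ℝ)
    (ha : y = a - 1 - ε ∨ y = a + ε) (hb : y = b - 1 - 2 * ε ∨ y = b + 2 * ε) : False := by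
  have key : ∀ n : ℤ, ∀ e : ℝ, 0 < e → e < 1 → (n : ℝ) = e → False := by
    intro n e he he1 hn
    have h2 : (0 : ℝ) < n := hn ▸ he
    have h3 : (n : ℝ) < 1 := hn ▸ he1
    have h2' : 0 < n := by exact_mod_cast h2
    have h3' : n < 1 := by exact_mod_cast h3
    omega
  rcases ha with ha | ha <;> rcases hb with hb | hb
  · exact key (b - a) ε h0 (by linarith) (by push_cast; linarith)
  · exact key (a - 1 - b) (3 * ε) (by linarith) (by linarith) (by push_cast; linarith)
  · exact key (b - 1 - a) (3 * ε) (by linarith) (by linarith) (by push_cast; linarith)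
  · exact key (a - b) ε h0 (by linarith) (by push_cast; linarith)

theorem frontier_biUnion_finite {ι : Type} (I : Set ι) (hI : I.Finite) (D : ι → Set Plane)
    (hcl : ∀ i, IsClosed (D i)) (y : Plane) (hy : y ∈ frontier (⋃ i ∈ I, D i)) :
    ∃ i ∈ I, y ∈ frontier (D i) := by
  rw [(hI.isClosed_biUnion fun i _ => hcl i).frontier_eq] at hy
  obtain ⟨h1, h2⟩ := hy
  simp only [mem_iUnion] at h1
  obtain ⟨i, hi, hyi⟩ := h1
  refine ⟨i, hi, ?_⟩
  rw [(hcl i).frontier_eq]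
  exact ⟨hyi, fun h => h2 (interior_mono (subset_biUnion_of_mem (u := D) hi) h)⟩

theorem frontier_inter_finite (P G : Set (ℕ × ℕ)) (hP : P.Finite) (hG : G.Finite)
    (ε : ℝ) (h0 : 0 < ε) (h1 : ε < 1 / 4) :
    (frontier (thick ε (fg P)) ∩ frontier (thick (2 * ε) (fg G))).Finite := by
  rw [thick_eq ε h0, thick_eq (2 * ε) (by linarith)]
  let V : (ℕ × ℕ) → ℝ → Fin 2 → Set ℝ := fun p δ i =>
    {(![(p.1 : ℝ), (p.2 : ℝ)] : Plane) i - 1 - δ, (![(p.1 : ℝ), (p.2 : ℝ)] : Plane) i + δ}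
  have hV : ∀ p δ i, (V p δ i).Finite := fun p δ i => by simp [V]
  have hfin : (⋃ p ∈ P, ⋃ q ∈ G, Set.pi univ (fun i => V p ε i ∪ V q (2 * ε) i)).Finite :=
    hP.biUnion fun p _ => hG.biUnion fun q _ =>
      Set.Finite.pi fun i => (hV p ε i).union (hV q (2 * ε) i)
  refine hfin.subset ?_
  rintro y ⟨hy1, hy2⟩
  obtain ⟨p, hp, hyp⟩ := frontier_biUnion_finite P hP _ (isClosed_box ε) y hy1
  obtain ⟨q, hq, hyq⟩ := frontier_biUnion_finite G hG _ (isClosed_box (2 * ε)) y hy2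
  simp only [mem_iUnion]
  refine ⟨p, hp, q, hq, ?_⟩
  have a := frontier_box _ _ _ hyp
  have b := frontier_box _ _ _ hyq
  intro i _
  rcases a with a | a <;> rcases b with b | b
  · exact (coord_aux ε h0 h1 _ _ _ a b).elim
  · fin_cases i
    · left; simpa [V] using a
    · right; simpa [V] using b
  · fin_cases i
    · right; simpa [V] using b
    · left; simpa [V] using a
  · exact (coord_aux ε h0 h1 _ _ _ a b).elim

/-- Surjectivity step. -/
theorem reach_TN (K L : Set Plane) (hK : IsClosed K)
    (hfin : (frontier K ∩ frontier L).Finite) (x : Plane) (hx : x ∈ K ∩ Lᶜ) (T : Set Plane)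
    (hT : IsCompOf T (Kᶜ ∩ Lᶜ)) (hE : SharesEdge T (connectedComponentIn (K ∩ Lᶜ) x)) :
    ∃ a ∈ Kᶜ ∩ Lᶜ, ∃ s : Set Plane, IsPreconnected s ∧ s ⊆ Kᶜ ∪ Lᶜ ∧ x ∈ s ∧ a ∈ s := by
  obtain ⟨a, ha, rfl⟩ := hT
  set C := connectedComponentIn (K ∩ Lᶜ) x with hC
  have hCs : C ⊆ K ∩ Lᶜ := connectedComponentIn_subset _ _
  have hTs : connectedComponentIn (Kᶜ ∩ Lᶜ) a ⊆ Kᶜ ∩ Lᶜ := connectedComponentIn_subset _ _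
  obtain ⟨y, ⟨hyT, hyC⟩, hyf⟩ := (hE.sdiff hfin).nonempty
  have hyK : y ∈ K := hK.closure_subset_iff.2 (fun z hz => (hCs hz).1) hyC
  have hyL : y ∈ Lᶜ := by
    intro hyL
    apply hyf
    rw [frontier_eq_closure_inter_closure, frontier_eq_closure_inter_closure]
    exact ⟨⟨subset_closure hyK, closure_mono (fun z hz => (hTs hz).1) hyT⟩,
      subset_closure hyL, closure_mono (fun z hz => (hTs hz).2) hyT⟩
  have hCy : IsPreconnected (insert y C) :=
    isPreconnected_connectedComponentIn.subset_closure (subset_insert _ _)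
      (insert_subset hyC subset_closure)
  have hTy : IsPreconnected (insert y (connectedComponentIn (Kᶜ ∩ Lᶜ) a)) :=
    isPreconnected_connectedComponentIn.subset_closure (subset_insert _ _)
      (insert_subset hyT subset_closure)
  refine ⟨a, ha, _, hCy.union y (mem_insert _ _) (mem_insert _ _) hTy, ?_, ?_, ?_⟩
  · refine union_subset (insert_subset (Or.inr hyL) fun z hz => Or.inr (hCs hz).2)
      (insert_subset (Or.inr hyL) fun z hz => Or.inr (hTs hz).2)
  · exact Or.inl (Or.inr (mem_connectedComponentIn hx))
  · exact Or.inr (Or.inr (mem_connectedComponentIn ha))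

theorem mk_eq_of_preconn (U : Set Plane) (s : Set Plane) (hs : IsPreconnected s) (hsU : s ⊆ U)
    (x y : Plane) (hx : x ∈ s) (hy : y ∈ s) :
    (ConnectedComponents.mk (⟨x, hsU hx⟩ : U)) = ConnectedComponents.mk ⟨y, hsU hy⟩ := by
  rw [ConnectedComponents.coe_eq_coe']
  have h := hs.subset_connectedComponentIn hy hsU hx
  rw [connectedComponentIn_eq_image (hsU hy)] at h
  obtain ⟨z, hz, hzx⟩ := h
  have : z = ⟨x, hsU hx⟩ := Subtype.ext hzx
  exact this ▸ hz

theorem bijective_of_regular (K L : Set Plane) (hK : IsClosed K) (hL : IsClosed L)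
    (hfin : (frontier K ∩ frontier L).Finite)
    (hFP : ∀ x ∈ K ∩ Lᶜ, ∃! T, IsCompOf T (Kᶜ ∩ Lᶜ) ∧ SharesEdge T (connectedComponentIn (K ∩ Lᶜ) x))
    (hFN : ∀ x ∈ L ∩ Kᶜ, ∃! T, IsCompOf T (Kᶜ ∩ Lᶜ) ∧ SharesEdge T (connectedComponentIn (L ∩ Kᶜ) x))
    (hlK : ∀ x ∈ K, x ∉ L → ∃ r > 0, ball x r ⊆ Lᶜ ∧ ∀ z ∈ ball x r,
      (z ∈ K → z ∈ connectedComponentIn (K ∩ Lᶜ) x) ∧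
      (z ∉ K → SharesEdge (connectedComponentIn (Kᶜ ∩ Lᶜ) z) (connectedComponentIn (K ∩ Lᶜ) x)))
    (hlL : ∀ x ∈ L, x ∉ K → ∃ r > 0, ball x r ⊆ Kᶜ ∧ ∀ z ∈ ball x r,
      (z ∈ L → z ∈ connectedComponentIn (L ∩ Kᶜ) x) ∧
      (z ∉ L → SharesEdge (connectedComponentIn (Kᶜ ∩ Lᶜ) z) (connectedComponentIn (L ∩ Kᶜ) x)))
    (hsub : Kᶜ ∩ Lᶜ ⊆ Kᶜ ∪ Lᶜ) :
    Function.Bijective (continuous_inclusion hsub).connectedComponentsMap := by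
  have hmap : ∀ a : ↥(Kᶜ ∩ Lᶜ), (continuous_inclusion hsub).connectedComponentsMap
      (ConnectedComponents.mk a) = ConnectedComponents.mk (inclusion hsub a) := fun a => rfl
  constructor
  · -- injectivity
    have hR : ∀ x : ↥(Kᶜ ∪ Lᶜ), ∃ T : Set Plane,
        ((x : Plane) ∈ Kᶜ ∩ Lᶜ → T = connectedComponentIn (Kᶜ ∩ Lᶜ) x) ∧
        ((x : Plane) ∈ K ∩ Lᶜ → ∀ T', IsCompOf T' (Kᶜ ∩ Lᶜ) →
          SharesEdge T' (connectedComponentIn (K ∩ Lᶜ) x) → T' = T) ∧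
        ((x : Plane) ∈ L ∩ Kᶜ → ∀ T', IsCompOf T' (Kᶜ ∩ Lᶜ) →
          SharesEdge T' (connectedComponentIn (L ∩ Kᶜ) x) → T' = T) ∧
        ((x : Plane) ∈ K ∩ Lᶜ → IsCompOf T (Kᶜ ∩ Lᶜ) ∧
          SharesEdge T (connectedComponentIn (K ∩ Lᶜ) x)) ∧
        ((x : Plane) ∈ L ∩ Kᶜ → IsCompOf T (Kᶜ ∩ Lᶜ) ∧
          SharesEdge T (connectedComponentIn (L ∩ Kᶜ) x)) := by
      rintro ⟨x, hx⟩
      by_cases hxK : x ∈ K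
      · by_cases hxL : x ∈ L
        · exact absurd hx (by simp [hxK, hxL])
        · obtain ⟨T, hT, hu⟩ := hFP x ⟨hxK, hxL⟩
          exact ⟨T, fun h => absurd hxK h.1, fun _ T' h1 h2 => hu T' ⟨h1, h2⟩,
            fun h => absurd h.1 hxL, fun _ => hT, fun h => absurd h.1 hxL⟩
      · by_cases hxL : x ∈ L
        · obtain ⟨T, hT, hu⟩ := hFN x ⟨hxL, hxK⟩
          exact ⟨T, fun h => absurd hxL h.2, fun h => absurd h.1 hxK,
            fun _ T' h1 h2 => hu T' ⟨h1, h2⟩, fun h => absurd h.1 hxK, fun _ => hT⟩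
        · exact ⟨_, fun _ => rfl, fun h => absurd h.1 hxK, fun h => absurd h.1 hxL,
            fun h => absurd h.1 hxK, fun h => absurd h.1 hxL⟩
    choose φ h1 h2 h3 h4 h5 using hR
    have hloc : IsLocallyConstant φ := by
      rw [IsLocallyConstant.iff_eventually_eq]
      rintro ⟨x, hx⟩
      rw [nhds_subtype_eq_comap]
      rw [Filter.eventually_comap]
      by_cases hxK : x ∈ K
      · have hxL : x ∉ L := fun hxL => absurd hx (by simp [hxK, hxL])
        obtain ⟨r, hr, hb, hz⟩ := hlK x hxK hxL
        filter_upwards [ball_mem_nhds x hr] with z hzb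
        rintro ⟨z', hzU⟩ rfl
        by_cases hzK : z' ∈ K
        · have hc := connectedComponentIn_eq ((hz z' hzb).1 hzK)
          obtain ⟨c1, c2⟩ := h4 ⟨z', hzU⟩ ⟨hzK, hb hzb⟩
          refine h2 ⟨x, hx⟩ ⟨hxK, hxL⟩ _ c1 ?_
          simp only at c2 ⊢
          rw [hc]; exact c2
        · rw [h1 ⟨z', hzU⟩ ⟨hzK, hb hzb⟩]
          exact h2 ⟨x, hx⟩ ⟨hxK, hxL⟩ _ ⟨z', ⟨hzK, hb hzb⟩, rfl⟩ ((hz z' hzb).2 hzK)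
      · by_cases hxL : x ∈ L
        · obtain ⟨r, hr, hb, hz⟩ := hlL x hxL hxK
          filter_upwards [ball_mem_nhds x hr] with z hzb
          rintro ⟨z', hzU⟩ rfl
          by_cases hzL : z' ∈ L
          · have hc := connectedComponentIn_eq ((hz z' hzb).1 hzL)
            obtain ⟨c1, c2⟩ := h5 ⟨z', hzU⟩ ⟨hzL, hb hzb⟩
            refine h3 ⟨x, hx⟩ ⟨hxL, hxK⟩ _ c1 ?_
            simp only at c2 ⊢
            rw [hc]; exact c2
          · rw [h1 ⟨z', hzU⟩ ⟨hb hzb, hzL⟩]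
            exact h3 ⟨x, hx⟩ ⟨hxL, hxK⟩ _ ⟨z', ⟨hb hzb, hzL⟩, rfl⟩ ((hz z' hzb).2 hzL)
        · obtain ⟨r, hr, hb⟩ := Metric.isOpen_iff.1
            (hK.isOpen_compl.inter hL.isOpen_compl) x ⟨hxK, hxL⟩
          filter_upwards [ball_mem_nhds x hr] with z hzb
          rintro ⟨z', hzU⟩ rfl
          rw [h1 ⟨z', hzU⟩ (hb hzb), h1 ⟨x, hx⟩ ⟨hxK, hxL⟩]
          exact (connectedComponentIn_eq
            ((convex_ball x r).isPreconnected.subset_connectedComponentIn (mem_ball_self hr)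
              hb hzb)).symm
    intro c1 c2
    obtain ⟨a, rfl⟩ := ConnectedComponents.surjective_coe c1
    obtain ⟨b, rfl⟩ := ConnectedComponents.surjective_coe c2
    intro hab
    rw [hmap, hmap, ConnectedComponents.coe_eq_coe'] at hab
    have hφ := hloc.apply_eq_of_isPreconnected isPreconnected_connectedComponent hab
      mem_connectedComponent
    rw [h1 _ a.2, h1 _ b.2] at hφ
    have hmem : (a : Plane) ∈ connectedComponentIn (Kᶜ ∩ Lᶜ) (b : Plane) := by
      have := mem_connectedComponentIn a.2
      exact hφ ▸ this
    exact mk_eq_of_preconn _ _ isPreconnected_connectedComponentIn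
      (connectedComponentIn_subset _ _) a b hmem (mem_connectedComponentIn b.2)
  · intro c
    obtain ⟨⟨x, hx⟩, rfl⟩ := ConnectedComponents.surjective_coe c
    have main : ∃ a ∈ Kᶜ ∩ Lᶜ, ∃ s : Set Plane,
        IsPreconnected s ∧ s ⊆ Kᶜ ∪ Lᶜ ∧ x ∈ s ∧ a ∈ s := by
      by_cases hxK : x ∈ K
      · have hxL : x ∉ L := fun hxL => absurd hx (by simp [hxK, hxL])
        obtain ⟨T, ⟨hT, hE⟩, -⟩ := hFP x ⟨hxK, hxL⟩
        exact reach_TN K L hK hfin x ⟨hxK, hxL⟩ T hT hE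
      · by_cases hxL : x ∈ L
        · obtain ⟨T, ⟨hT, hE⟩, -⟩ := hFN x ⟨hxL, hxK⟩
          rw [inter_comm] at hT hfin
          have := reach_TN L K hL hfin x ⟨hxL, hxK⟩ T hT hE
          rwa [inter_comm, union_comm] at this
        · exact ⟨x, ⟨hxK, hxL⟩, {x}, isPreconnected_singleton, by simpa using hx, rfl, rfl⟩
    obtain ⟨a, ha, s, hs, hsU, hxs, has⟩ := main
    exact ⟨ConnectedComponents.mk ⟨a, ha⟩, mk_eq_of_preconn _ s hs hsU a x has hxs⟩

/-- Under the zero-loss hypothesis, the inclusion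
`TN ↪ B_ε(P) ∪ B_{2ε}(G)` (sending the component of `x` in `TN` to the component of `x` in
the union of the backgrounds) induces a bijection on connected components. -/
theorem zero_loss_components_bijection_background
    (h w : ℕ) (P G : Set (ℕ × ℕ)) (hP : OnGrid P h w) (hG : OnGrid G h w)
    (ε : ℝ) (hε0 : 0 < ε) (hε : ε < 1 / 4) (hzero : ZeroLoss P G ε) :
    Function.Bijective
      (continuous_inclusion (TNset_subset_union P G ε)).connectedComponentsMap := by
  have hPf : P.Finite := ((finite_Icc 1 h).prod (finite_Icc 1 w)).subset hP
  have hGf : G.Finite := ((finite_Icc 1 h).prod (finite_Icc 1 w)).subset hG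
  have h2ε : 0 < 2 * ε := by linarith
  have hK : IsClosed (thick ε (fg P)) := by
    rw [thick_eq ε hε0]; exact hPf.isClosed_biUnion fun i _ => isClosed_box _ i
  have hL : IsClosed (thick (2 * ε) (fg G)) := by
    rw [thick_eq _ h2ε]; exact hGf.isClosed_biUnion fun i _ => isClosed_box _ i
  refine bijective_of_regular (thick ε (fg P)) (thick (2 * ε) (fg G)) hK hL
    (frontier_inter_finite P G hPf hGf ε hε0 hε) ?_ ?_ ?_ ?_ (TNset_subset_union P G ε)
  · intro x hx
    exact (hzero.1 _ ⟨x, hx, rfl⟩).2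
  · intro x hx
    rw [inter_comm] at hx
    have := (hzero.2 _ ⟨x, hx, rfl⟩).2
    rw [FNset, inter_comm] at this
    exact this
  · intro x hx hxL
    exact local_structure P hPf (box ε) (isClosed_box ε) (convex_box ε)
      (interior_box_nonempty ε hε0) _ _ (thick_eq ε hε0 P) hL x hx hxL
  · intro x hx hxK
    have := local_structure G hGf (box (2 * ε)) (isClosed_box _) (convex_box _)
      (interior_box_nonempty _ h2ε) _ _ (thick_eq _ h2ε G) hK x hx hxK
    rwa [inter_comm (thick (2 * ε) (fg G))ᶜ] at this

end
end
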